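/- arXiv:1902.09830 — 2 statements merged into one kernel-verified Lean document; each statement's English description precedes it below -/
import Mathlib

section
/- For every positive integer k there exist constants C, D > 0 depending only on k with the following property: for every finite field 𝔽, all finite-dimensional 𝔽-vector spaces G_1, …, G_k, and every multilinear form α : G_1 × ⋯ × G_k → 𝔽, the partition rank of α satisfies prank(α) ≤ C·(arank(α)^D + 1). -/
namespace PRank

open Finset

/-! ### Linear algebra -/

lemma exists_cols {K m n : Type*} [Field K] [Fintype m] [Fintype n]
    (M : Matrix m n K) (s : ℕ) (hs : s ≤ M.rank) :
    ∃ c : Fin s → n, LinearIndependent K (fun a => M.col (c a)) := by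
  classical
  obtain ⟨κ, a, ha, hspan, hli⟩ := exists_linearIndependent' K M.col
  have : Finite κ := Finite.of_injective a ha
  have : Fintype κ := Fintype.ofFinite κ
  have hcard : Fintype.card κ = M.rank := by
    rw [Matrix.rank_eq_finrank_span_cols, ← hspan, finrank_span_eq_card hli]
  have e : Fin s ↪ κ := by
    apply (Fin.castLEEmb (hs.trans hcard.ge)).trans
    exact (Fintype.equivFin κ).symm.toEmbedding
  exact ⟨fun t => a (e t), hli.comp e e.injective⟩

lemma exists_minor {K m n : Type*} [Field K] [Fintype m] [Fintype n]
    (M : Matrix m n K) (s : ℕ) (hs : s ≤ M.rank) :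
    ∃ (r : Fin s → m) (c : Fin s → n), (M.submatrix r c).det ≠ 0 := by
  classical
  obtain ⟨c, hc⟩ := exists_cols M s hs
  have h1 : (M.submatrix id c).transpose.rank = s := by
    have h2 : LinearIndependent K (M.submatrix id c).transpose.row := hc
    simpa using h2.rank_matrix
  obtain ⟨r, hr⟩ := exists_cols (M.submatrix id c).transpose s h1.ge
  refine ⟨r, c, ?_⟩
  have h3 : LinearIndependent K (M.submatrix r c).row := hr
  rw [Matrix.linearIndependent_rows_iff_isUnit, Matrix.isUnit_iff_isUnit_det] at h3
  exact h3.ne_zero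

lemma le_rank_of_minor {K m n : Type*} [Field K] [Fintype m] [Fintype n]
    (M : Matrix m n K) {s : ℕ} (r : Fin s → m) (c : Fin s → n)
    (h : (M.submatrix r c).det ≠ 0) : s ≤ M.rank := by
  have := Matrix.rank_submatrix_le M r c
  rw [Matrix.rank_of_det_ne_zero h] at this
  simpa using this

lemma mulVec_eq_zero_of_minor {K m n : Type*} [Field K] [Fintype m] [Fintype n]
    (M : Matrix m n K) {s : ℕ} (r : Fin s → m) (c : Fin s → n)
    (h : (M.submatrix r c).det ≠ 0) (hrk : M.rank ≤ s) (y : n → K)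
    (hy : (M.submatrix r id).mulVec y = 0) : M.mulVec y = 0 := by
  classical
  have hli : LinearIndependent K (fun a => M.row (r a)) := by
    have h3 : LinearIndependent K (M.submatrix r c).row := by
      rw [Matrix.linearIndependent_rows_iff_isUnit, Matrix.isUnit_iff_isUnit_det]
      exact h.isUnit
    have : (M.submatrix r c).row = (LinearMap.funLeft K K c) ∘ (fun a => M.row (r a)) := by
      rfl
    rw [this] at h3
    exact LinearIndependent.of_comp _ h3
  have hspan : Submodule.span K (Set.range (fun a => M.row (r a)))
      = Submodule.span K (Set.range M.row) := by
    apply Submodule.eq_of_le_of_finrank_le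
    · apply Submodule.span_mono
      rintro _ ⟨a, rfl⟩
      exact ⟨r a, rfl⟩
    · rw [← Matrix.rank_eq_finrank_span_row, finrank_span_eq_card hli]
      simpa using hrk
  ext i
  have hmem : M.row i ∈ Submodule.span K (Set.range (fun a => M.row (r a))) := by
    rw [hspan]; exact Submodule.subset_span ⟨i, rfl⟩
  have key : ∀ z ∈ Submodule.span K (Set.range (fun a => M.row (r a))), z ⬝ᵥ y = 0 := by
    intro z hz
    induction hz using Submodule.span_induction with
    | mem x hx => obtain ⟨a, rfl⟩ := hx; exact congrFun hy a
    | zero => simp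
    | add x y _ _ h1 h2 => rw [add_dotProduct, h1, h2, add_zero]
    | smul a x _ h1 => rw [smul_dotProduct, h1, smul_zero]
  exact key _ hmem

/-- The (unnormalised) Cramer projection to the kernel. -/
def cramerProj {R ι : Type*} [CommRing R] [Fintype ι] [DecidableEq ι] (M : Matrix ι ι R) {s : ℕ}
    (r c : Fin s → ι) (y : ι → R) : ι → R :=
  fun l => (M.submatrix r c).det * y l -
    ∑ a, (((M.submatrix r c).adjugate.mulVec ((M.submatrix r id).mulVec y)) a) *
      (Pi.single (c a) (1 : R) : ι → R) l

lemma submatrix_mulVec_cramerProj {R ι : Type*} [CommRing R] [Fintype ι] [DecidableEq ι]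
    (M : Matrix ι ι R) {s : ℕ} (r c : Fin s → ι) (y : ι → R) :
    (M.submatrix r id).mulVec (cramerProj M r c y) = 0 := by
  have h1 : cramerProj M r c y = (M.submatrix r c).det • y -
    ∑ a, (((M.submatrix r c).adjugate.mulVec ((M.submatrix r id).mulVec y)) a) •
      (Pi.single (c a) (1 : R) : ι → R) := by
    ext l; simp [cramerProj, Finset.sum_apply]
  rw [h1, Matrix.mulVec_sub, Matrix.mulVec_smul, Matrix.mulVec_sum]
  have h2 : ∀ z : Fin s → R, ∑ a, (M.submatrix r id).mulVec (z a • (Pi.single (c a) (1 : R) : ι → R))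
      = (M.submatrix r c).mulVec z := by
    intro z
    ext i
    simp [Matrix.mulVec_smul, Finset.sum_apply, Matrix.mulVec, dotProduct, mul_comm]
  rw [h2, Matrix.mulVec_mulVec, Matrix.mul_adjugate, Matrix.smul_mulVec, Matrix.one_mulVec, sub_self]

lemma cramerProj_of_ker {R ι : Type*} [CommRing R] [Fintype ι] [DecidableEq ι]
    (M : Matrix ι ι R) {s : ℕ} (r c : Fin s → ι) (y : ι → R) (hy : M.mulVec y = 0) :
    cramerProj M r c y = (M.submatrix r c).det • y := by
  have h : (M.submatrix r id).mulVec y = 0 := by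
    ext i; exact congrFun hy (r i)
  ext l
  simp [cramerProj, h]

lemma mulVec_cramerProj {K ι : Type*} [Field K] [Fintype ι] [DecidableEq ι]
    (M : Matrix ι ι K) {s : ℕ} (r c : Fin s → ι) (y : ι → K)
    (h : (M.submatrix r c).det ≠ 0) (hrk : M.rank ≤ s) :
    M.mulVec (cramerProj M r c y) = 0 :=
  mulVec_eq_zero_of_minor M r c h hrk _ (submatrix_mulVec_cramerProj M r c y)

/-- `cramerProj` as a linear map. -/
def cramerLin {R ι : Type*} [CommRing R] [Fintype ι] [DecidableEq ι] (M : Matrix ι ι R) {s : ℕ}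
    (r c : Fin s → ι) : (ι → R) →ₗ[R] (ι → R) where
  toFun := cramerProj M r c
  map_add' x y := by
    ext l
    simp only [cramerProj, Matrix.mulVec_add, Pi.add_apply, add_mul, Finset.sum_add_distrib]
    ring
  map_smul' t x := by
    ext l
    simp only [cramerProj, Matrix.mulVec_smul, Pi.smul_apply, smul_eq_mul, RingHom.id_apply,
      mul_sub, Finset.mul_sum]
    congr 1
    · ring
    · exact Finset.sum_congr rfl fun a _ => by ring

lemma cramerProj_map {R R' ι : Type*} [CommRing R] [CommRing R'] [Fintype ι] [DecidableEq ι]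
    (φ : R →+* R') (M : Matrix ι ι R) {s : ℕ} (r c : Fin s → ι) (y : ι → R) (l : ι) :
    φ (cramerProj M r c y l) = cramerProj (M.map φ) r c (fun l => φ (y l)) l := by
  have h1 : (M.map φ).submatrix r c = φ.mapMatrix (M.submatrix r c) := rfl
  have h3 : ∀ a, (((M.map φ).submatrix r c).adjugate.mulVec
      (((M.map φ).submatrix r id).mulVec (fun l => φ (y l)))) a
      = φ (((M.submatrix r c).adjugate.mulVec ((M.submatrix r id).mulVec y)) a) := by
    intro a
    rw [h1, ← RingHom.map_adjugate]
    simp [Matrix.mulVec, dotProduct, map_sum]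
  simp only [cramerProj, map_sub, map_mul, map_sum, h3]
  rw [h1, ← RingHom.map_det]
  congr 1
  refine Finset.sum_congr rfl fun a _ => ?_
  congr 1
  by_cases hl : l = c a <;> simp [hl]

/-! ### Univariate count -/

lemma card_det_zero_le {K : Type*} [Field K] [Fintype K] [DecidableEq K] {s : ℕ}
    (A B : Matrix (Fin s) (Fin s) K) (hA : A.det ≠ 0) :
    (univ.filter (fun t : K => (t • A + B).det = 0)).card ≤ s := by
  classical
  set P : Polynomial K := Matrix.det ((Polynomial.X : Polynomial K) • A.map Polynomial.C
    + B.map Polynomial.C) with hP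
  have hc : P.coeff s = A.det := by
    have := Polynomial.coeff_det_X_add_C_card A B
    simpa using this
  have hne : P ≠ 0 := by
    intro h; rw [h] at hc; exact hA (by simpa using hc.symm)
  have hdeg : P.natDegree ≤ s := by
    have := Polynomial.natDegree_det_X_add_C_le A B
    simpa using this
  have hev : ∀ t, P.eval t = (t • A + B).det := by
    intro t
    rw [hP, ← Polynomial.coe_evalRingHom, RingHom.map_det]
    congr 1
    ext i j
    simp
    exact mul_comm _ _
  calc _ ≤ P.roots.toFinset.card := by
        apply Finset.card_le_card
        intro t ht
        have ht := (Finset.mem_filter.mp ht).2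
        rw [Multiset.mem_toFinset, Polynomial.mem_roots hne, Polynomial.IsRoot, hev, ht]
    _ ≤ P.roots.card := Multiset.toFinset_card_le _
    _ ≤ P.natDegree := P.card_roots'
    _ ≤ s := hdeg

/-! ### Schwartz–Zippel -/

lemma sz {K σ : Type*} [Field K] [Fintype K] [DecidableEq K] [Fintype σ] [DecidableEq σ]
    (p : MvPolynomial σ K) (hp : p ≠ 0) :
    Fintype.card K * (univ.filter (fun u : σ → K => MvPolynomial.eval u p = 0)).card
      ≤ p.totalDegree * Fintype.card (σ → K) := by
  set e := Fintype.equivFin σ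
  set p' := MvPolynomial.rename e p with hp'
  have hp0 : p' ≠ 0 := by
    intro h
    exact hp ((MvPolynomial.rename_injective _ e.injective) (by rw [← hp', h, map_zero]))
  have h := MvPolynomial.schwartz_zippel_totalDegree hp0 (univ : Finset K)
  have hd : p'.totalDegree ≤ p.totalDegree := MvPolynomial.totalDegree_rename_le _ _
  replace h := h.trans (div_le_div_of_nonneg_right (Nat.cast_le.mpr hd) (Nat.cast_nonneg _))
  have hcard : (univ.filter (fun u : σ → K => MvPolynomial.eval u p = 0)).card
      = ((Fintype.piFinset fun _ : Fin (Fintype.card σ) => (univ : Finset K)).filter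
          (fun f => MvPolynomial.eval f p' = 0)).card := by
    apply Finset.card_bij (fun u _ => u ∘ e.symm)
    · intro u hu
      simp only [mem_filter, mem_univ, true_and, Fintype.piFinset_univ] at hu ⊢
      rw [hp', MvPolynomial.eval_rename]
      simpa [Function.comp_assoc] using hu
    · intro u _ v _ huv
      funext a
      simpa using congrFun huv (e a)
    · intro f hf
      refine ⟨f ∘ e, ?_, ?_⟩
      · simp only [mem_filter, mem_univ, true_and, Fintype.piFinset_univ] at hf ⊢
        rwa [hp', MvPolynomial.eval_rename] at hf
      · funext a; simp
  rw [← hcard] at h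
  have hq : (0 : ℚ≥0) < Fintype.card K := by exact_mod_cast Fintype.card_pos
  rw [Finset.card_univ, div_le_div_iff₀ (by positivity) hq] at h
  have h2 : Fintype.card (σ → K) = Fintype.card K ^ Fintype.card σ := by simp
  rw [h2]
  have : (((univ.filter (fun u : σ → K => MvPolynomial.eval u p = 0)).card * Fintype.card K : ℕ) : ℚ≥0)
      ≤ ((p.totalDegree * Fintype.card K ^ Fintype.card σ : ℕ) : ℚ≥0) := by
    push_cast; exact h
  have := Nat.cast_le.mp this
  linarith

end PRank

namespace PRank

open Finset

set_option linter.unusedSectionVars false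

/-! ### Tensors as multilinear evaluations -/

section evaluation

variable {K : Type*} [Field K] {ι : Type*} [Fintype ι] [DecidableEq ι] {d : ℕ}

/-- Evaluate the tensor `T` at vectors with entries in a `K`-algebra. -/
noncomputable def evM (R : Type*) [CommRing R] [Algebra K R] (T : (Fin d → ι) → ι → K) (w : ι) :
    MultilinearMap R (fun _ : Fin d => ι → R) R :=
  ∑ j : Fin d → ι, algebraMap K R (T j w) •
    (MultilinearMap.mkPiAlgebra R (Fin d) R).compLinearMap (fun i => LinearMap.proj (j i))

lemma evM_apply (R : Type*) [CommRing R] [Algebra K R] (T : (Fin d → ι) → ι → K) (w : ι)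
    (x : Fin d → ι → R) :
    evM R T w x = ∑ j : Fin d → ι, algebraMap K R (T j w) * ∏ i, x i (j i) := by
  simp [evM]

lemma evM_map {R R' : Type*} [CommRing R] [Algebra K R] [CommRing R'] [Algebra K R']
    (φ : R →ₐ[K] R') (T : (Fin d → ι) → ι → K) (w : ι) (x : Fin d → ι → R) :
    φ (evM R T w x) = evM R' T w (fun i l => φ (x i l)) := by
  simp [evM_apply, map_sum, map_prod]

/-- The matrix of the linear map obtained by freeing the coordinate `i`. -/
noncomputable def Lmat {R : Type*} [CommRing R] [Algebra K R] (T : (Fin d → ι) → ι → K)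
    (x : Fin d → ι → R) (i : Fin d) : Matrix ι ι R :=
  Matrix.of fun w v => evM R T w (Function.update x i (Pi.single v 1))

lemma Lmat_mulVec {R : Type*} [CommRing R] [Algebra K R] (T : (Fin d → ι) → ι → K)
    (x : Fin d → ι → R) (i : Fin d) (y : ι → R) (w : ι) :
    (Lmat T x i).mulVec y w = evM R T w (Function.update x i y) := by
  conv_rhs => rw [pi_eq_sum_univ' y]
  rw [MultilinearMap.map_update_sum]
  simp only [Matrix.mulVec, dotProduct, Lmat, Matrix.of_apply]
  refine Finset.sum_congr rfl fun v _ => ?_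
  rw [MultilinearMap.map_update_smul, smul_eq_mul, mul_comm]

lemma Lmat_update_self {R : Type*} [CommRing R] [Algebra K R] (T : (Fin d → ι) → ι → K)
    (x : Fin d → ι → R) (i : Fin d) (y : ι → R) :
    Lmat T (Function.update x i y) i = Lmat T x i := by
  ext w v; simp [Lmat]

lemma Lmat_map {R R' : Type*} [CommRing R] [Algebra K R] [CommRing R'] [Algebra K R']
    (φ : R →ₐ[K] R') (T : (Fin d → ι) → ι → K) (x : Fin d → ι → R) (i : Fin d) :
    (Lmat T x i).map φ = Lmat T (fun i l => φ (x i l)) i := by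
  ext w v
  simp only [Lmat, Matrix.map_apply, Matrix.of_apply, evM_map]
  congr 1
  funext j l
  by_cases hj : j = i
  · subst hj
    by_cases hl : l = v <;> simp [hl]
  · simp [hj]

lemma Lmat_update_add {R : Type*} [CommRing R] [Algebra K R] (T : (Fin d → ι) → ι → K)
    (x : Fin d → ι → R) {i j : Fin d} (hij : j ≠ i) (y z : ι → R) (t : R) :
    Lmat T (Function.update x i (y + t • z)) j
      = t • Lmat T (Function.update x i z) j + Lmat T (Function.update x i y) j := by
  ext w v
  simp only [Lmat, Matrix.add_apply, Matrix.smul_apply, Matrix.of_apply, smul_eq_mul]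
  rw [Function.update_comm hij.symm, Function.update_comm hij.symm, Function.update_comm hij.symm,
    MultilinearMap.map_update_add, MultilinearMap.map_update_smul, smul_eq_mul, add_comm]

/-- The polynomial walk starting at `x0`. -/
noncomputable def path {R : Type*} [CommRing R] [Algebra K R] (T : (Fin d → ι) → ι → K)
    (x0 : Fin d → ι → K) (r : Fin d → ℕ) (rr cc : ∀ i, Fin (r i) → ι) (u : Fin d → ι → R) :
    ℕ → Fin d → ι → R
  | 0 => fun i l => algebraMap K R (x0 i l)
  | s + 1 => if h : s < d then
      Function.update (path T x0 r rr cc u s) ⟨s, h⟩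
        (path T x0 r rr cc u s ⟨s, h⟩ +
          cramerProj (Lmat T (path T x0 r rr cc u s) ⟨s, h⟩) (rr ⟨s, h⟩) (cc ⟨s, h⟩) (u ⟨s, h⟩))
      else path T x0 r rr cc u s

lemma path_succ {R : Type*} [CommRing R] [Algebra K R] (T : (Fin d → ι) → ι → K)
    (x0 : Fin d → ι → K) (r : Fin d → ℕ) (rr cc : ∀ i, Fin (r i) → ι) (u : Fin d → ι → R)
    (i : Fin d) : path T x0 r rr cc u (i.val + 1) =
      Function.update (path T x0 r rr cc u i) i
        (path T x0 r rr cc u i i +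
          cramerProj (Lmat T (path T x0 r rr cc u i) i) (rr i) (cc i) (u i)) := by
  simp [path]

lemma path_map {R R' : Type*} [CommRing R] [Algebra K R] [CommRing R'] [Algebra K R']
    (φ : R →ₐ[K] R') (T : (Fin d → ι) → ι → K)
    (x0 : Fin d → ι → K) (r : Fin d → ℕ) (rr cc : ∀ i, Fin (r i) → ι) (u : Fin d → ι → R)
    (s : ℕ) : (fun i l => φ (path T x0 r rr cc u s i l))
      = path T x0 r rr cc (fun i l => φ (u i l)) s := by
  induction s with
  | zero => funext i l; simp [path]
  | succ s ih =>
    by_cases h : s < d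
    · have h1 := path_succ T x0 r rr cc u ⟨s, h⟩
      have h2 := path_succ T x0 r rr cc (fun i l => φ (u i l)) ⟨s, h⟩
      simp only at h1 h2
      rw [h1, h2, ← ih]
      funext i l
      by_cases hi : i = ⟨s, h⟩
      · subst hi
        simp only [Function.update_self, Pi.add_apply, map_add]
        congr 1
        rw [← Lmat_map φ]
        exact cramerProj_map φ.toRingHom _ _ _ _ _
      · simp [hi]
    · simpa [path, h] using ih

lemma path_congr {R : Type*} [CommRing R] [Algebra K R] (T : (Fin d → ι) → ι → K)
    (x0 : Fin d → ι → K) (r : Fin d → ℕ) (rr cc : ∀ i, Fin (r i) → ι) (u u' : Fin d → ι → R)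
    (s : ℕ) (h : ∀ i : Fin d, i.val < s → u i = u' i) :
    path T x0 r rr cc u s = path T x0 r rr cc u' s := by
  induction s with
  | zero => rfl
  | succ s ih =>
    have ih' := ih (fun i hi => h i (by omega))
    by_cases hs : s < d
    · have h1 := path_succ T x0 r rr cc u ⟨s, hs⟩
      have h2 := path_succ T x0 r rr cc u' ⟨s, hs⟩
      simp only at h1 h2
      rw [h1, h2, ih', h ⟨s, hs⟩ (by simp)]
    · simpa [path, hs] using ih'

lemma path_apply_of_le {R : Type*} [CommRing R] [Algebra K R] (T : (Fin d → ι) → ι → K)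
    (x0 : Fin d → ι → K) (r : Fin d → ℕ) (rr cc : ∀ i, Fin (r i) → ι) (u : Fin d → ι → R)
    (s : ℕ) (i : Fin d) (h : s ≤ i.val) :
    path T x0 r rr cc u s i = fun l => algebraMap K R (x0 i l) := by
  induction s with
  | zero => rfl
  | succ s ih =>
    have hs : s < d := by omega
    have hne : i ≠ ⟨s, hs⟩ := by
      intro h'; rw [h'] at h; simp at h
    have h1 := path_succ T x0 r rr cc u ⟨s, hs⟩
    simp only at h1
    rw [h1, Function.update_of_ne hne]
    exact ih (by omega)

lemma path_apply_of_gt {R : Type*} [CommRing R] [Algebra K R] (T : (Fin d → ι) → ι → K)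
    (x0 : Fin d → ι → K) (r : Fin d → ℕ) (rr cc : ∀ i, Fin (r i) → ι) (u : Fin d → ι → R)
    (s : ℕ) (i : Fin d) (h : i.val < s) :
    path T x0 r rr cc u s i = fun l => algebraMap K R (x0 i l) +
      cramerProj (Lmat T (path T x0 r rr cc u i) i) (rr i) (cc i) (u i) l := by
  induction s with
  | zero => omega
  | succ s ih =>
    by_cases hs : s < d
    · have h1 := path_succ T x0 r rr cc u ⟨s, hs⟩
      simp only at h1
      rw [h1]
      by_cases hi : i = ⟨s, hs⟩
      · subst hi
        rw [Function.update_self, path_apply_of_le T x0 r rr cc u s ⟨s, hs⟩ le_rfl]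
        rfl
      · rw [Function.update_of_ne hi]
        apply ih
        have : i.val ≠ s := fun h' => hi (Fin.ext h')
        omega
    · have : i.val < s := by omega
      simpa [path, hs] using ih this

lemma path_zero {R : Type*} [CommRing R] [Algebra K R] (T : (Fin d → ι) → ι → K)
    (x0 : Fin d → ι → K) (r : Fin d → ℕ) (rr cc : ∀ i, Fin (r i) → ι)
    (s : ℕ) : path T x0 r rr cc (0 : Fin d → ι → R) s = fun i l => algebraMap K R (x0 i l) := by
  funext i
  rcases le_or_gt s i.val with h | h
  · exact path_apply_of_le _ _ _ _ _ _ _ _ h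
  · rw [path_apply_of_gt _ _ _ _ _ _ _ _ h]
    funext l
    have : cramerProj (Lmat T (path T x0 r rr cc (0 : Fin d → ι → R) i) i) (rr i) (cc i) (0 : ι → R) = 0 :=
      (cramerLin _ (rr i) (cc i)).map_zero
    simp [this]

end evaluation

end PRank

namespace PRank

open Finset

section counting

set_option linter.unusedSectionVars false

variable {K : Type*} [Field K] [Fintype K] [DecidableEq K] {ι : Type*} [Fintype ι] [DecidableEq ι]
  {d : ℕ}

/-- The zero set. -/
noncomputable def Zs (T : (Fin d → ι) → ι → K) : Finset (Fin d → ι → K) :=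
  univ.filter (fun x => ∀ w, evM K T w x = 0)

lemma mem_Zs {T : (Fin d → ι) → ι → K} {x : Fin d → ι → K} :
    x ∈ Zs T ↔ ∀ w, evM K T w x = 0 := by simp [Zs]

lemma update_mem_Zs {T : (Fin d → ι) → ι → K} {x : Fin d → ι → K} {i : Fin d} {y : ι → K} :
    Function.update x i y ∈ Zs T ↔ (Lmat T x i).mulVec y = 0 := by
  rw [mem_Zs]
  constructor
  · intro h; funext w; rw [Lmat_mulVec]; exact h w
  · intro h w; rw [← Lmat_mulVec, h]; rfl

lemma mem_Zs_iff_mulVec {T : (Fin d → ι) → ι → K} {x : Fin d → ι → K} (i : Fin d) :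
    x ∈ Zs T ↔ (Lmat T x i).mulVec (x i) = 0 := by
  rw [← update_mem_Zs, Function.update_eq_self]

/-- The key of the fibre in direction `i`. -/
def key (i : Fin d) (x : Fin d → ι → K) : Fin d → ι → K := Function.update x i 0

lemma key_update (i : Fin d) (x : Fin d → ι → K) (y : ι → K) :
    key i (Function.update x i y) = key i x := by simp [key]

lemma eq_update_of_key {i : Fin d} {x y : Fin d → ι → K} (h : key i x = key i y) :
    y = Function.update x i (y i) := by
  have : Function.update (key i x) i (y i) = Function.update (key i y) i (y i) := by rw [h]
  simpa [key] using this.symm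

lemma fiberwise_le (i : Fin d) (B Z : Finset (Fin d → ι → K)) (a b : ℕ)
    (h : ∀ z, a * (B.filter (fun x => key i x = z)).card
      ≤ b * (Z.filter (fun x => key i x = z)).card) :
    a * B.card ≤ b * Z.card := by
  rw [Finset.card_eq_sum_card_fiberwise (s := B) (f := key i) (t := univ) (by intro x _; simp),
    Finset.card_eq_sum_card_fiberwise (s := Z) (f := key i) (t := univ) (by intro x _; simp),
    Finset.mul_sum, Finset.mul_sum]
  exact Finset.sum_le_sum fun z _ => h z

/-- Points where the rank in direction `j` can be increased by moving in direction `i`. -/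
noncomputable def badS (T : (Fin d → ι) → ι → K) (c : ℕ) (i j : Fin d) : Finset (Fin d → ι → K) :=
  (Zs T).filter (fun x => (Lmat T x j).rank ≤ c ∧ ∃ y : ι → K, Function.update x i y ∈ Zs T ∧
    (Lmat T x j).rank < (Lmat T (Function.update x i y) j).rank)

lemma badS_self (T : (Fin d → ι) → ι → K) (c : ℕ) (i : Fin d) : badS T c i i = ∅ := by
  apply Finset.filter_eq_empty_iff.mpr
  rintro x _ ⟨_, y, _, h⟩
  rw [Lmat_update_self] at h
  exact lt_irrefl _ h

lemma card_badS (T : (Fin d → ι) → ι → K) (c : ℕ) (i j : Fin d) :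
    Fintype.card K * (badS T c i j).card ≤ (c + 1) * (Zs T).card := by
  by_cases hij : j = i
  · subst hij; simp [badS_self]
  apply fiberwise_le i
  intro z
  set F := (Zs T).filter (fun x => key i x = z) with hF
  set B := (badS T c i j).filter (fun x => key i x = z) with hB
  rcases F.eq_empty_or_nonempty with hF0 | hF0
  · have : B ⊆ F := by
      intro x hx
      rw [hB, mem_filter] at hx
      rw [hF, mem_filter]
      exact ⟨(mem_filter.mp hx.1).1, hx.2⟩
    rw [hF0, subset_empty] at this
    simp [this]
  obtain ⟨y, hyF, hymax⟩ := F.exists_max_image (fun x => min (Lmat T x j).rank (c + 1)) hF0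
  set s := min (Lmat T y j).rank (c + 1) with hs
  obtain ⟨rr, cc, hdet⟩ := exists_minor (Lmat T y j) s (min_le_left _ _)
  have hyF' := mem_filter.mp hyF
  -- the shift
  have hshift : ∀ t : K, ∀ x ∈ F, Function.update x i (x i + t • y i) ∈ F := by
    intro t x hx
    have hx' := mem_filter.mp hx
    rw [hF, mem_filter, key_update]
    refine ⟨?_, hx'.2⟩
    rw [update_mem_Zs, Matrix.mulVec_add, Matrix.mulVec_smul]
    have h1 : (Lmat T x i).mulVec (x i) = 0 := (mem_Zs_iff_mulVec i).mp hx'.1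
    have h2 : y = Function.update x i (y i) := eq_update_of_key (hx'.2.trans hyF'.2.symm)
    have h3 : (Lmat T x i).mulVec (y i) = 0 := by
      rw [← update_mem_Zs, ← h2]; exact hyF'.1
    rw [h1, h3]; simp
  have hcount : ∀ t : K, B.card = (F.filter (fun x => Function.update x i (x i + t • y i) ∈ B)).card := by
    intro t
    symm
    refine Finset.card_bij' (fun x _ => Function.update x i (x i + t • y i))
      (fun x _ => Function.update x i (x i + (-t) • y i)) ?_ ?_ ?_ ?_
    · intro x hx; exact (mem_filter.mp hx).2
    · intro x hx
      have hxF : x ∈ F := by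
        rw [hB, mem_filter] at hx
        rw [hF, mem_filter]
        exact ⟨(mem_filter.mp hx.1).1, hx.2⟩
      rw [mem_filter]
      refine ⟨hshift _ _ hxF, ?_⟩
      simpa using hx
    · intro x hx; simp
    · intro x hx; simp
  have hbd : ∀ x ∈ F, (univ.filter (fun t : K => Function.update x i (x i + t • y i) ∈ B)).card
      ≤ c + 1 := by
    intro x hx
    have hx' := mem_filter.mp hx
    refine le_trans ?_ (min_le_right (Lmat T y j).rank (c + 1))
    rw [← hs]
    refine le_trans (Finset.card_le_card ?_) (card_det_zero_le ((Lmat T y j).submatrix rr cc)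
      ((Lmat T x j).submatrix rr cc) hdet)
    intro t ht
    have ht := (mem_filter.mp ht).2
    rw [mem_filter]
    refine ⟨mem_univ _, ?_⟩
    by_contra hne
    have h2 : y = Function.update x i (y i) := eq_update_of_key (hx'.2.trans hyF'.2.symm)
    have h4 := Lmat_update_add T x hij (x i) (y i) t
    rw [← h2, Function.update_eq_self] at h4
    have hrk : s ≤ (Lmat T (Function.update x i (x i + t • y i)) j).rank := by
      rw [h4]
      exact le_rank_of_minor _ rr cc hne
    set x' := Function.update x i (x i + t • y i) with hx'def
    rw [hB, mem_filter, badS, mem_filter] at ht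
    obtain ⟨⟨hz, hle, v, hv, hlt⟩, hk⟩ := ht
    have hvF : Function.update x' i v ∈ F := by
      rw [hF, mem_filter, key_update]; exact ⟨hv, hk⟩
    have := hymax _ hvF
    omega
  calc Fintype.card K * B.card = ∑ t : K, B.card := by simp
    _ = ∑ t : K, (F.filter (fun x => Function.update x i (x i + t • y i) ∈ B)).card :=
        Finset.sum_congr rfl fun t _ => hcount t
    _ = ∑ x ∈ F, (univ.filter (fun t : K => Function.update x i (x i + t • y i) ∈ B)).card := by
        simp only [Finset.card_filter]
        exact Finset.sum_comm
    _ ≤ ∑ x ∈ F, (c + 1) := Finset.sum_le_sum hbd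
    _ = (c + 1) * F.card := by simp [mul_comm]

/-- All points of the zero set that are bad in some direction. -/
noncomputable def badT (T : (Fin d → ι) → ι → K) (c : ℕ) : Finset (Fin d → ι → K) :=
  univ.biUnion fun p : Fin d × Fin d => badS T c p.1 p.2

lemma card_badT (T : (Fin d → ι) → ι → K) (c : ℕ) :
    Fintype.card K * (badT T c).card ≤ d ^ 2 * (c + 1) * (Zs T).card := by
  calc Fintype.card K * (badT T c).card
      ≤ Fintype.card K * ∑ p : Fin d × Fin d, (badS T c p.1 p.2).card :=
        Nat.mul_le_mul_left _ Finset.card_biUnion_le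
    _ = ∑ p : Fin d × Fin d, Fintype.card K * (badS T c p.1 p.2).card := by rw [Finset.mul_sum]
    _ ≤ ∑ p : Fin d × Fin d, (c + 1) * (Zs T).card :=
        Finset.sum_le_sum fun p _ => card_badS T c _ _
    _ = _ := by simp; ring

/-- Points with large rank in direction `j`. -/
noncomputable def bigS (T : (Fin d → ι) → ι → K) (c : ℕ) (j : Fin d) : Finset (Fin d → ι → K) :=
  (Zs T).filter (fun x => c < (Lmat T x j).rank)

lemma card_ker (M : Matrix ι ι K) (c : ℕ) (h : c < M.rank) :
    Fintype.card K ^ (c + 1) * (univ.filter (fun y : ι → K => M.mulVec y = 0)).card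
      ≤ Fintype.card (ι → K) := by
  classical
  have h1 : (univ.filter (fun y : ι → K => M.mulVec y = 0)).card
      = Fintype.card K ^ (Module.finrank K (LinearMap.ker M.mulVecLin)) := by
    rw [← Module.card_eq_pow_finrank (K := K) (V := LinearMap.ker M.mulVecLin), Fintype.card_subtype]
    congr 1
    ext y
    simp [LinearMap.mem_ker]
  have h2 := LinearMap.finrank_range_add_finrank_ker M.mulVecLin
  have h3 : Module.finrank K (LinearMap.range M.mulVecLin) = M.rank := rfl
  rw [h1, ← pow_add, Module.card_eq_pow_finrank (K := K) (V := ι → K)]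
  exact Nat.pow_le_pow_right Fintype.card_pos (by omega)

lemma card_bigS (T : (Fin d → ι) → ι → K) (c : ℕ) (j : Fin d) :
    Fintype.card K ^ (c + 1) * (bigS T c j).card ≤ Fintype.card (Fin d → ι → K) := by
  have := fiberwise_le j (bigS T c j) univ (Fintype.card K ^ (c + 1)) 1 ?_
  · simpa using this
  intro z
  rw [one_mul]
  rcases ((bigS T c j).filter (fun x => key j x = z)).eq_empty_or_nonempty with h | ⟨x, hx⟩
  · simp [h]
  rw [mem_filter, bigS, mem_filter] at hx
  obtain ⟨⟨hxZ, hrk⟩, hk⟩ := hx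
  have h1 := card_ker (Lmat T x j) c hrk
  refine le_trans (Nat.mul_le_mul_left _ ?_) (h1.trans ?_)
  · apply Finset.card_le_card_of_injOn (fun y => y j)
    · intro y hy
      have hy : y ∈ filter (fun x => key j x = z) (bigS T c j) := hy
      rw [mem_filter, bigS, mem_filter] at hy
      simp only [coe_filter, mem_univ, true_and, Set.mem_ofPred_eq]
      rw [← update_mem_Zs, ← eq_update_of_key (hk.trans hy.2.symm)]
      exact hy.1.1
    · intro y hy y' hy' hyy
      have hy : y ∈ filter (fun x => key j x = z) (bigS T c j) := hy
      have hy' : y' ∈ filter (fun x => key j x = z) (bigS T c j) := hy'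
      rw [mem_filter] at hy hy'
      rw [eq_update_of_key (hk.trans hy.2.symm), eq_update_of_key (hk.trans hy'.2.symm)]
      simp only at hyy
      rw [hyy]
  · rw [← Finset.card_univ]
    apply Finset.card_le_card_of_injOn (fun y => Function.update x j y)
    · intro y _
      simp [key_update, hk]
    · intro y _ y' _ hyy
      exact Function.update_injective x j hyy

/-- Points such that many points in the fibre are in `E`. -/
noncomputable def markovS (T : (Fin d → ι) → ι → K) (i : Fin d) (E : Finset (Fin d → ι → K)) :
    Finset (Fin d → ι → K) :=
  (Zs T).filter (fun x => ((Zs T).filter (fun y => key i y = key i x)).card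
    ≤ 4 * (E.filter (fun y => key i y = key i x)).card)

lemma card_markovS (T : (Fin d → ι) → ι → K) (i : Fin d) (E : Finset (Fin d → ι → K)) :
    (markovS T i E).card ≤ 4 * E.card := by
  have := fiberwise_le i (markovS T i E) E 1 4 ?_
  · simpa using this
  intro z
  rw [one_mul]
  rcases ((markovS T i E).filter (fun x => key i x = z)).eq_empty_or_nonempty with h | ⟨x, hx⟩
  · simp [h]
  rw [mem_filter, markovS, mem_filter] at hx
  obtain ⟨⟨hxZ, hle⟩, hk⟩ := hx
  rw [hk] at hle
  refine le_trans (Finset.card_le_card ?_) hle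
  intro y hy
  rw [mem_filter, markovS, mem_filter] at hy
  rw [mem_filter]
  exact ⟨hy.1.1, hy.2⟩

/-- Nested bad sets, indexed by the number of remaining steps. -/
noncomputable def badR (T : (Fin d → ι) → ι → K) (c : ℕ) : ℕ → Finset (Fin d → ι → K)
  | 0 => badT T c
  | t + 1 => badT T c ∪ (if h : d - (t + 1) < d then markovS T ⟨d - (t + 1), h⟩ (badR T c t) else ∅)

lemma badT_subset_badR (T : (Fin d → ι) → ι → K) (c t : ℕ) : badT T c ⊆ badR T c t := by
  cases t with
  | zero => exact Finset.Subset.refl _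
  | succ t => exact Finset.subset_union_left

lemma card_badR (T : (Fin d → ι) → ι → K) (c t : ℕ) :
    (badR T c t).card ≤ 5 ^ t * (badT T c).card := by
  induction t with
  | zero => simp [badR]
  | succ t ih =>
    have h1 : (if h : d - (t + 1) < d then markovS T ⟨d - (t + 1), h⟩ (badR T c t) else ∅).card
        ≤ 4 * (badR T c t).card := by
      split_ifs
      · exact card_markovS _ _ _
      · simp
    have h2 := Finset.card_union_le (badT T c)
      (if h : d - (t + 1) < d then markovS T ⟨d - (t + 1), h⟩ (badR T c t) else ∅)
    have h3 : 1 ≤ 5 ^ t := Nat.one_le_pow _ _ (by norm_num)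
    have h4 : (badT T c).card ≤ 5 ^ t * (badT T c).card := Nat.le_mul_of_pos_left _ h3
    rw [badR, pow_succ]
    calc _ ≤ _ := h2
      _ ≤ 5 ^ t * (badT T c).card + 4 * (5 ^ t * (badT T c).card) := by
          have := Nat.mul_le_mul_left 4 ih
          omega
      _ = _ := by ring

/-- Existence of a good starting point. -/
lemma exists_start (T : (Fin d → ι) → ι → K) (c : ℕ)
    (hZ : Fintype.card (Fin d → ι → K) ≤ Fintype.card K ^ c * (Zs T).card)
    (hq : 5 ^ d * (d ^ 2 * (c + 1)) + d < Fintype.card K) :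
    ∃ x0 ∈ Zs T, x0 ∉ badR T c d ∧ ∀ j, (Lmat T x0 j).rank ≤ c := by
  by_contra hcon
  push Not at hcon
  have hsub : Zs T ⊆ badR T c d ∪ univ.biUnion (fun j => bigS T c j) := by
    intro x hx
    by_cases hb : x ∈ badR T c d
    · exact mem_union_left _ hb
    · obtain ⟨j, hj⟩ := hcon x hx hb
      apply mem_union_right
      rw [mem_biUnion]
      exact ⟨j, mem_univ _, by rw [bigS, mem_filter]; exact ⟨hx, hj⟩⟩
  have hZpos : 0 < (Zs T).card := by
    rcases Nat.eq_zero_or_pos (Zs T).card with h | h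
    · rw [h, mul_zero] at hZ
      have : 0 < Fintype.card (Fin d → ι → K) := Fintype.card_pos
      omega
    · exact h
  have hqpos : 0 < Fintype.card K := Fintype.card_pos
  have hbig : ∀ j, Fintype.card K * (bigS T c j).card ≤ (Zs T).card := by
    intro j
    have h1 := (card_bigS T c j).trans hZ
    rw [pow_succ, mul_assoc] at h1
    exact Nat.le_of_mul_le_mul_left h1 (pow_pos hqpos c)
  have hbr : Fintype.card K * (badR T c d).card ≤ 5 ^ d * (d ^ 2 * (c + 1)) * (Zs T).card := by
    calc Fintype.card K * (badR T c d).card ≤ Fintype.card K * (5 ^ d * (badT T c).card) :=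
          Nat.mul_le_mul_left _ (card_badR T c d)
      _ = 5 ^ d * (Fintype.card K * (badT T c).card) := by ring
      _ ≤ 5 ^ d * (d ^ 2 * (c + 1) * (Zs T).card) := Nat.mul_le_mul_left _ (card_badT T c)
      _ = _ := by ring
  have h1 : (Zs T).card ≤ (badR T c d).card + ∑ j, (bigS T c j).card :=
    (Finset.card_le_card hsub).trans ((Finset.card_union_le _ _).trans
      (Nat.add_le_add_left Finset.card_biUnion_le _))
  have h2 : Fintype.card K * (Zs T).card ≤ (5 ^ d * (d ^ 2 * (c + 1)) + d) * (Zs T).card := by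
    calc Fintype.card K * (Zs T).card
        ≤ Fintype.card K * ((badR T c d).card + ∑ j, (bigS T c j).card) := Nat.mul_le_mul_left _ h1
      _ = Fintype.card K * (badR T c d).card + ∑ j, Fintype.card K * (bigS T c j).card := by
          rw [mul_add, Finset.mul_sum]
      _ ≤ 5 ^ d * (d ^ 2 * (c + 1)) * (Zs T).card + ∑ j : Fin d, (Zs T).card :=
          Nat.add_le_add hbr (Finset.sum_le_sum fun j _ => hbig j)
      _ = _ := by simp; ring
  have h3 := Nat.le_of_mul_le_mul_right h2 hZpos
  omega

end counting

end PRank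

namespace PRank

open Finset

section degrees

set_option linter.unusedSectionVars false

variable {K : Type*} [Field K] {ι : Type*} [Fintype ι] [DecidableEq ι] {d : ℕ} {σ : Type*}

lemma deg_sum_le {κ : Type*} (s : Finset κ) (f : κ → MvPolynomial σ K) (E : ℕ)
    (h : ∀ a ∈ s, (f a).totalDegree ≤ E) : (∑ a ∈ s, f a).totalDegree ≤ E :=
  (MvPolynomial.totalDegree_finsetSum _ _).trans (Finset.sup_le h)

lemma deg_prod_le {κ : Type*} (s : Finset κ) (f : κ → MvPolynomial σ K) (E : ℕ)
    (h : ∀ a ∈ s, (f a).totalDegree ≤ E) : (∏ a ∈ s, f a).totalDegree ≤ s.card * E := by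
  refine (MvPolynomial.totalDegree_finsetProd _ _).trans ?_
  refine (Finset.sum_le_sum h).trans ?_
  simp

lemma deg_det_le {s : ℕ} (M : Matrix (Fin s) (Fin s) (MvPolynomial σ K)) (E : ℕ)
    (h : ∀ a b, (M a b).totalDegree ≤ E) : M.det.totalDegree ≤ s * E := by
  rw [Matrix.det_apply]
  apply deg_sum_le
  intro p _
  have h1 : (∏ i, M (p i) i).totalDegree ≤ s * E := by
    simpa using deg_prod_le univ (fun i => M (p i) i) E (fun a _ => h _ _)
  rcases Int.units_eq_one_or (Equiv.Perm.sign p) with h2 | h2 <;> rw [h2]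
  · simpa using h1
  · simpa using h1

lemma deg_single_le {κ : Type*} [DecidableEq κ] (a b : κ) :
    ((Pi.single a (1 : MvPolynomial σ K) : κ → MvPolynomial σ K) b).totalDegree = 0 := by
  by_cases h : b = a
  · subst h; simp
  · simp [h]

lemma deg_adj_le {s : ℕ} (M : Matrix (Fin s) (Fin s) (MvPolynomial σ K)) (E : ℕ)
    (h : ∀ a b, (M a b).totalDegree ≤ E) (a b : Fin s) :
    (M.adjugate a b).totalDegree ≤ s * E := by
  rw [Matrix.adjugate_apply]
  apply deg_det_le
  intro i j
  by_cases hi : i = b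
  · subst hi
    rw [Matrix.updateRow_self, deg_single_le]
    exact Nat.zero_le _
  · rw [Matrix.updateRow_ne hi]
    exact h _ _

lemma deg_cramerProj_le (M : Matrix ι ι (MvPolynomial σ K)) {s : ℕ} (r c : Fin s → ι)
    (y : ι → MvPolynomial σ K) (E : ℕ) (hM : ∀ a b, (M a b).totalDegree ≤ E)
    (hy : ∀ a, (y a).totalDegree ≤ 1) (l : ι) :
    (cramerProj M r c y l).totalDegree ≤ (s + 1) * E + 1 := by
  unfold cramerProj
  refine (MvPolynomial.totalDegree_sub _ _).trans (max_le ?_ ?_)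
  · refine (MvPolynomial.totalDegree_mul _ _).trans ?_
    have h1 := deg_det_le (M.submatrix r c) E (fun a b => hM _ _)
    have h2 := hy l
    nlinarith
  · apply deg_sum_le
    intro a _
    refine (MvPolynomial.totalDegree_mul _ _).trans ?_
    rw [deg_single_le, add_zero]
    simp only [Matrix.mulVec, dotProduct]
    apply deg_sum_le
    intro b _
    refine (MvPolynomial.totalDegree_mul _ _).trans ?_
    have h1 := deg_adj_le (M.submatrix r c) E (fun a b => hM _ _) a b
    have h2 : (∑ j, M.submatrix r id b j * y j).totalDegree ≤ E + 1 := by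
      apply deg_sum_le
      intro j _
      refine (MvPolynomial.totalDegree_mul _ _).trans ?_
      exact Nat.add_le_add (hM _ _) (hy _)
    calc _ ≤ s * E + (E + 1) := Nat.add_le_add h1 h2
      _ = _ := by ring

lemma deg_evM_le (T : (Fin d → ι) → ι → K) (w : ι) (x : Fin d → ι → MvPolynomial σ K) (F : ℕ)
    (hx : ∀ i l, (x i l).totalDegree ≤ F) :
    (evM (MvPolynomial σ K) T w x).totalDegree ≤ d * F := by
  rw [evM_apply]
  apply deg_sum_le
  intro j _
  refine (MvPolynomial.totalDegree_mul _ _).trans ?_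
  have h1 : (algebraMap K (MvPolynomial σ K) (T j w)).totalDegree = 0 :=
    MvPolynomial.totalDegree_C _
  rw [h1, zero_add]
  simpa using deg_prod_le univ (fun i => x i (j i)) F (fun a _ => hx _ _)

lemma deg_Lmat_le (T : (Fin d → ι) → ι → K) (x : Fin d → ι → MvPolynomial σ K) (F : ℕ)
    (hx : ∀ i l, (x i l).totalDegree ≤ F) (i : Fin d) (a b : ι) :
    (Lmat T x i a b).totalDegree ≤ d * F := by
  rw [Lmat, Matrix.of_apply]
  apply deg_evM_le
  intro j l
  by_cases hj : j = i
  · subst hj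
    rw [Function.update_self, deg_single_le]
    exact Nat.zero_le _
  · rw [Function.update_of_ne hj]; exact hx _ _

lemma deg_path_le (T : (Fin d → ι) → ι → K)
    (x0 : Fin d → ι → K) (r : Fin d → ℕ) (rr cc : ∀ i, Fin (r i) → ι)
    (u : Fin d → ι → MvPolynomial σ K) (hu : ∀ i l, (u i l).totalDegree ≤ 1)
    (c : ℕ) (hr : ∀ i, r i ≤ c) (s : ℕ) (i : Fin d) (l : ι) :
    (path T x0 r rr cc u s i l).totalDegree ≤ ((c + 1) * d + 1) ^ s := by
  induction s generalizing i l with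
  | zero =>
    have h1 : (algebraMap K (MvPolynomial σ K) (x0 i l)).totalDegree = 0 :=
      MvPolynomial.totalDegree_C _
    simp [path, h1]
  | succ s ih =>
    have hmono : ((c + 1) * d + 1) ^ s ≤ ((c + 1) * d + 1) ^ (s + 1) :=
      Nat.pow_le_pow_right (by omega) (by omega)
    have hpos : 1 ≤ ((c + 1) * d + 1) ^ s := Nat.one_le_pow _ _ (by omega)
    by_cases hs : s < d
    · have h1 := path_succ T x0 r rr cc u ⟨s, hs⟩
      simp only at h1
      rw [h1]
      by_cases hi : i = ⟨s, hs⟩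
      · subst hi
        rw [Function.update_self, Pi.add_apply]
        refine (MvPolynomial.totalDegree_add _ _).trans (max_le ((ih _ _).trans hmono) ?_)
        refine (deg_cramerProj_le _ _ _ _ (d * ((c + 1) * d + 1) ^ s)
          (deg_Lmat_le T _ _ ih _) (hu _) l).trans ?_
        have h2 := hr ⟨s, hs⟩
        rw [pow_succ]
        calc (r ⟨s, hs⟩ + 1) * (d * ((c + 1) * d + 1) ^ s) + 1
            ≤ (c + 1) * (d * ((c + 1) * d + 1) ^ s) + ((c + 1) * d + 1) ^ s := by gcongr
          _ = _ := by ring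
      · rw [Function.update_of_ne hi]
        exact (ih _ _).trans hmono
    · have : path T x0 r rr cc u (s + 1) = path T x0 r rr cc u s := by simp [path, hs]
      rw [this]
      exact (ih _ _).trans hmono

/-- The minors along the path. -/
noncomputable def gpol {R : Type*} [CommRing R] [Algebra K R] (T : (Fin d → ι) → ι → K)
    (x0 : Fin d → ι → K) (r : Fin d → ℕ) (rr cc : ∀ i, Fin (r i) → ι) (u : Fin d → ι → R)
    (i : Fin d) : R :=
  ((Lmat T (path T x0 r rr cc u i) i).submatrix (rr i) (cc i)).det

lemma gpol_map {R R' : Type*} [CommRing R] [Algebra K R] [CommRing R'] [Algebra K R']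
    (φ : R →ₐ[K] R') (T : (Fin d → ι) → ι → K)
    (x0 : Fin d → ι → K) (r : Fin d → ℕ) (rr cc : ∀ i, Fin (r i) → ι) (u : Fin d → ι → R)
    (i : Fin d) : φ (gpol T x0 r rr cc u i) = gpol T x0 r rr cc (fun i l => φ (u i l)) i := by
  unfold gpol
  rw [← path_map φ, ← Lmat_map φ]
  exact RingHom.map_det φ.toRingHom _

/-- The polynomial to avoid. -/
noncomputable def Qpol {R : Type*} [CommRing R] [Algebra K R] (T : (Fin d → ι) → ι → K)
    (x0 : Fin d → ι → K) (r : Fin d → ℕ) (rr cc : ∀ i, Fin (r i) → ι) (w : ι) (u : Fin d → ι → R) :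
    R :=
  (∏ i, gpol T x0 r rr cc u i) * evM R T w (path T x0 r rr cc u d)

lemma Qpol_map {R R' : Type*} [CommRing R] [Algebra K R] [CommRing R'] [Algebra K R']
    (φ : R →ₐ[K] R') (T : (Fin d → ι) → ι → K)
    (x0 : Fin d → ι → K) (r : Fin d → ℕ) (rr cc : ∀ i, Fin (r i) → ι) (w : ι) (u : Fin d → ι → R) :
    φ (Qpol T x0 r rr cc w u) = Qpol T x0 r rr cc w (fun i l => φ (u i l)) := by
  unfold Qpol
  rw [map_mul, map_prod, evM_map, path_map]
  simp only [gpol_map]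

lemma deg_Qpol_le (T : (Fin d → ι) → ι → K)
    (x0 : Fin d → ι → K) (r : Fin d → ℕ) (rr cc : ∀ i, Fin (r i) → ι) (w : ι)
    (u : Fin d → ι → MvPolynomial σ K) (hu : ∀ i l, (u i l).totalDegree ≤ 1)
    (c : ℕ) (hr : ∀ i, r i ≤ c) :
    (Qpol T x0 r rr cc w u).totalDegree ≤ (d * c + 1) * (d * ((c + 1) * d + 1) ^ d) := by
  unfold Qpol
  refine (MvPolynomial.totalDegree_mul _ _).trans ?_
  have hp := deg_path_le T x0 r rr cc u hu c hr
  have h1 := deg_evM_le T w _ _ (hp d)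
  have h2 : ∀ i, (gpol T x0 r rr cc u i).totalDegree ≤ c * (d * ((c + 1) * d + 1) ^ d) := by
    intro i
    unfold gpol
    refine (deg_det_le _ _ (fun a b => deg_Lmat_le T _ _ (hp i) i _ _)).trans ?_
    have h3 : ((c + 1) * d + 1) ^ i.val ≤ ((c + 1) * d + 1) ^ d :=
      Nat.pow_le_pow_right (by omega) i.2.le
    have h4 := hr i
    gcongr
  have h3 := deg_prod_le univ (gpol T x0 r rr cc u) _ (fun i _ => h2 i)
  rw [Finset.card_univ, Fintype.card_fin] at h3
  calc _ ≤ d * (c * (d * ((c + 1) * d + 1) ^ d)) + d * ((c + 1) * d + 1) ^ d := Nat.add_le_add h3 h1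
    _ = _ := by ring

end degrees

end PRank

namespace PRank

open Finset

section walking

set_option linter.unusedSectionVars false

variable {K : Type*} [Field K] [Fintype K] [DecidableEq K] {ι : Type*} [Fintype ι] [DecidableEq ι]
  {d : ℕ}

lemma fibre_card (L : (ι → K) →ₗ[K] (ι → K)) (z : ι → K) :
    (univ.filter (fun v => L v = z)).card ≤ (univ.filter (fun v => L v = 0)).card := by
  rcases (univ.filter (fun v => L v = z)).eq_empty_or_nonempty with h | ⟨v0, h0⟩
  · simp [h]
  have h0 : L v0 = z := by simpa using h0
  apply Finset.card_le_card_of_injOn (fun v => v - v0)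
  · intro v hv
    have hv : L v = z := by simpa using hv
    simp [hv, h0]
  · intro v _ v' _ h
    simpa using h

lemma fibre_card' (L : (ι → K) →ₗ[K] (ι → K)) (z : ι → K) (hz : ∃ v, L v = z) :
    (univ.filter (fun v => L v = 0)).card ≤ (univ.filter (fun v => L v = z)).card := by
  obtain ⟨v0, h0⟩ := hz
  apply Finset.card_le_card_of_injOn (fun v => v + v0)
  · intro v hv
    have hv : L v = 0 := by simpa using hv
    simp [hv, h0]
  · intro v _ v' _ h
    simpa using h

lemma shift_count (T : (Fin d → ι) → ι → K) (i : Fin d) (E : Finset (Fin d → ι → K))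
    (x : Fin d → ι → K) (hx : x ∈ Zs T) (hm : x ∉ markovS T i E) (L : (ι → K) →ₗ[K] (ι → K))
    (hL : ∀ y, (Lmat T x i).mulVec y = 0 → ∃ v, L v = y) :
    4 * (univ.filter (fun v => Function.update x i (x i + L v) ∈ E)).card
      < Fintype.card (ι → K) := by
  set n := (univ.filter (fun v => L v = 0)).card with hn
  have hnpos : 0 < n := Finset.card_pos.mpr ⟨0, by simp⟩
  set Zf := (Zs T).filter (fun y => key i y = key i x) with hZf
  set Ef := E.filter (fun y => key i y = key i x) with hEf
  have hlt : 4 * Ef.card < Zf.card := by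
    by_contra hcon
    apply hm
    rw [markovS, mem_filter]
    exact ⟨hx, not_lt.mp hcon⟩
  have h1 : (univ.filter (fun v => Function.update x i (x i + L v) ∈ E)).card ≤ n * Ef.card := by
    refine Finset.card_le_mul_card_image_of_maps_to
      (f := fun v => Function.update x i (x i + L v)) (t := Ef) ?_ n ?_
    · intro v hv
      rw [hEf, mem_filter]
      exact ⟨(mem_filter.mp hv).2, key_update _ _ _⟩
    · intro y hy
      refine le_trans (Finset.card_le_card ?_) (fibre_card L (y i - x i))
      intro v hv
      rw [mem_filter] at hv
      rw [mem_filter]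
      refine ⟨mem_univ _, ?_⟩
      rw [← hv.2, Function.update_self]
      abel
  have h2 : n * Zf.card ≤ (univ : Finset (ι → K)).card := by
    refine le_trans (Finset.mul_card_image_le_card_of_maps_to
      (f := fun v => Function.update x i (x i + L v)) (t := Zf)
      (s := univ.filter (fun v => Function.update x i (x i + L v) ∈ Zf)) ?_ n ?_)
      (Finset.card_le_card (Finset.filter_subset _ _))
    · intro v hv
      exact (mem_filter.mp hv).2
    · intro y hy
      have hy' := mem_filter.mp hy
      have hyx : y = Function.update x i (y i) := eq_update_of_key hy'.2.symm
      have hk : (Lmat T x i).mulVec (y i - x i) = 0 := by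
        rw [Matrix.mulVec_sub, (mem_Zs_iff_mulVec i).mp hx, sub_zero, ← update_mem_Zs, ← hyx]
        exact hy'.1
      refine le_trans (fibre_card' L (y i - x i) (hL _ hk)) (Finset.card_le_card ?_)
      intro v hv
      have hv := (mem_filter.mp hv).2
      have h3 : Function.update x i (x i + L v) = y := by
        rw [hv, add_sub_cancel, ← hyx]
      rw [mem_filter, mem_filter]
      exact ⟨⟨mem_univ _, by rw [h3]; exact hy⟩, h3⟩
  rw [← Finset.card_univ]
  nlinarith

lemma walk (T : (Fin d → ι) → ι → K) (c : ℕ) (x0 : Fin d → ι → K) (hx0 : x0 ∈ Zs T)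
    (hb : x0 ∉ badR T c d) (r : Fin d → ℕ) (hr : ∀ j, (Lmat T x0 j).rank = r j)
    (hc : ∀ j, r j ≤ c) (rr cc : ∀ i, Fin (r i) → ι)
    (hq : 2 * ((d * c + 1) * (d * ((c + 1) * d + 1) ^ d)) < Fintype.card K) (w : ι)
    (u0 : Fin d → ι → K) (hu0 : Qpol T x0 r rr cc w u0 ≠ 0) (s : ℕ) (hs : s ≤ d) :
    ∃ u : Fin d → ι → K, Qpol T x0 r rr cc w u ≠ 0 ∧ path T x0 r rr cc u s ∈ Zs T ∧
      path T x0 r rr cc u s ∉ badR T c (d - s) ∧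
      ∀ j, (Lmat T (path T x0 r rr cc u s) j).rank ≤ r j := by
  induction s with
  | zero =>
    have h : path T x0 r rr cc u0 0 = x0 := by simp [path]
    refine ⟨u0, hu0, ?_⟩
    rw [h, Nat.sub_zero]
    exact ⟨hx0, hb, fun j => (hr j).le⟩
  | succ s ih =>
    obtain ⟨u, hQ, hZ, hbad, hrk⟩ := ih (by omega)
    set i : Fin d := ⟨s, by omega⟩ with hi
    set x := path T x0 r rr cc u s with hx
    obtain ⟨t, ht⟩ : ∃ t, d - s = t + 1 := ⟨d - s - 1, by omega⟩
    have ht' : d - (s + 1) = t := by omega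
    rw [ht, badR, mem_union, not_or] at hbad
    obtain ⟨hbT, hbM⟩ := hbad
    have hdt : d - (t + 1) = s := by omega
    have hdt' : d - (t + 1) < d := by omega
    rw [dif_pos hdt'] at hbM
    have hii : (⟨d - (t + 1), hdt'⟩ : Fin d) = i := Fin.ext hdt
    rw [hii] at hbM
    -- the minor is nonzero at `u`
    have hg : ((Lmat T x i).submatrix (rr i) (cc i)).det ≠ 0 := by
      have h1 : ∏ i, gpol T x0 r rr cc u i ≠ 0 := left_ne_zero_of_mul hQ
      exact (Finset.prod_ne_zero_iff.mp h1) i (mem_univ _)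
    have hcount1 := shift_count T i (badR T c t) x hZ hbM (cramerLin (Lmat T x i) (rr i) (cc i)) (by
      intro y hy
      refine ⟨((Lmat T x i).submatrix (rr i) (cc i)).det⁻¹ • y, ?_⟩
      rw [map_smul]
      have h2 : cramerLin (Lmat T x i) (rr i) (cc i) y
        = ((Lmat T x i).submatrix (rr i) (cc i)).det • y := cramerProj_of_ker _ _ _ _ hy
      rw [h2, smul_smul, inv_mul_cancel₀ hg, one_smul])
    -- the polynomial in direction `i`
    set u' : Fin d → ι → MvPolynomial ι K :=
      fun j l => if j = i then MvPolynomial.X l else MvPolynomial.C (u j l) with hu'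
    set P := Qpol T x0 r rr cc w u' with hP
    have hev : ∀ v : ι → K, MvPolynomial.eval v P = Qpol T x0 r rr cc w (Function.update u i v) := by
      intro v
      have h1 := Qpol_map (MvPolynomial.aeval v : MvPolynomial ι K →ₐ[K] K) T x0 r rr cc w u'
      have h2 : (fun j l => (MvPolynomial.aeval v : MvPolynomial ι K →ₐ[K] K) (u' j l))
          = Function.update u i v := by
        funext j l
        by_cases hj : j = i
        · rw [hj]; simp [hu']
        · simp [hu', hj]
      rw [h2] at h1
      exact h1
    have hP0 : P ≠ 0 := by
      intro h
      have h1 := hev (u i)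
      rw [h, map_zero, Function.update_eq_self] at h1
      exact hQ h1.symm
    have hdeg := deg_Qpol_le T x0 r rr cc w u' (by
      intro j l
      by_cases hj : j = i
      · simp [hu', hj]
      · simp [hu', hj]) c hc
    have hsz := sz P hP0
    have hN : 0 < Fintype.card (ι → K) := Fintype.card_pos
    have hcount2 : 2 * (univ.filter (fun v : ι → K => MvPolynomial.eval v P = 0)).card
        < Fintype.card (ι → K) := by
      have h1 : Fintype.card K * (2 * (univ.filter (fun v : ι → K => MvPolynomial.eval v P = 0)).card)
          < Fintype.card K * Fintype.card (ι → K) := by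
        calc _ = 2 * (Fintype.card K *
              (univ.filter (fun v : ι → K => MvPolynomial.eval v P = 0)).card) := by ring
          _ ≤ 2 * (P.totalDegree * Fintype.card (ι → K)) := Nat.mul_le_mul_left _ hsz
          _ ≤ 2 * (((d * c + 1) * (d * ((c + 1) * d + 1) ^ d)) * Fintype.card (ι → K)) :=
              Nat.mul_le_mul_left _ (Nat.mul_le_mul_right _ hdeg)
          _ = 2 * ((d * c + 1) * (d * ((c + 1) * d + 1) ^ d)) * Fintype.card (ι → K) := by ring
          _ < _ := Nat.mul_lt_mul_of_pos_right hq hN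
      exact Nat.lt_of_mul_lt_mul_left h1
    obtain ⟨v, hv1, hv2⟩ : ∃ v : ι → K, MvPolynomial.eval v P ≠ 0 ∧
        Function.update x i (x i + cramerLin (Lmat T x i) (rr i) (cc i) v) ∉ badR T c t := by
      by_contra hcon
      push Not at hcon
      have h1 : (univ : Finset (ι → K)) ⊆
          univ.filter (fun v => Function.update x i
            (x i + cramerLin (Lmat T x i) (rr i) (cc i) v) ∈ badR T c t)
          ∪ univ.filter (fun v : ι → K => MvPolynomial.eval v P = 0) := by
        intro v _
        rw [mem_union, mem_filter, mem_filter]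
        by_cases h : MvPolynomial.eval v P = 0
        · exact Or.inr ⟨mem_univ _, h⟩
        · exact Or.inl ⟨mem_univ _, hcon v h⟩
      have h2 := (Finset.card_le_card h1).trans (Finset.card_union_le _ _)
      rw [Finset.card_univ] at h2
      omega
    have hpath : path T x0 r rr cc (Function.update u i v) (s + 1)
        = Function.update x i (x i + cramerLin (Lmat T x i) (rr i) (cc i) v) := by
      have h1 := path_succ T x0 r rr cc (Function.update u i v) i
      have h2 : path T x0 r rr cc (Function.update u i v) s = x := by
        rw [hx]
        apply path_congr
        intro j hj
        rw [Function.update_of_ne]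
        intro h
        rw [h] at hj
        exact lt_irrefl _ hj
      simp only [hi] at h1
      rw [h1, h2, Function.update_self]
      rfl
    have hnewZ : Function.update x i (x i + cramerLin (Lmat T x i) (rr i) (cc i) v) ∈ Zs T := by
      rw [update_mem_Zs, Matrix.mulVec_add, (mem_Zs_iff_mulVec i).mp hZ, zero_add]
      exact mulVec_cramerProj _ _ _ _ hg (hrk i)
    refine ⟨Function.update u i v, ?_, ?_, ?_, ?_⟩
    · rw [← hev]; exact hv1
    · rw [hpath]; exact hnewZ
    · rw [hpath, ht']; exact hv2
    · intro j
      rw [hpath]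
      by_contra hcon
      apply hbT
      rw [badT, mem_biUnion]
      refine ⟨(i, j), mem_univ _, ?_⟩
      rw [badS, mem_filter]
      exact ⟨hZ, (hrk j).trans (hc j), _, hnewZ, lt_of_le_of_lt (hrk j) (not_le.mp hcon)⟩

lemma vanish (T : (Fin d → ι) → ι → K) (c : ℕ) (x0 : Fin d → ι → K) (hx0 : x0 ∈ Zs T)
    (hb : x0 ∉ badR T c d) (r : Fin d → ℕ) (hr : ∀ j, (Lmat T x0 j).rank = r j)
    (hc : ∀ j, r j ≤ c) (rr cc : ∀ i, Fin (r i) → ι)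
    (hdet : ∀ i, ((Lmat T x0 i).submatrix (rr i) (cc i)).det ≠ 0)
    (hq : 2 * ((d * c + 1) * (d * ((c + 1) * d + 1) ^ d)) < Fintype.card K) (w : ι) :
    evM (MvPolynomial (Fin d × ι) K) T w
      (path T x0 r rr cc (fun i l => MvPolynomial.X (i, l)) d) = 0 := by
  by_contra hne
  set U : Fin d → ι → MvPolynomial (Fin d × ι) K := fun i l => MvPolynomial.X (i, l) with hU
  have hg : ∀ i, gpol T x0 r rr cc U i ≠ 0 := by
    intro i h
    have h1 := gpol_map (MvPolynomial.aeval (0 : Fin d × ι → K) :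
      MvPolynomial (Fin d × ι) K →ₐ[K] K) T x0 r rr cc U i
    have h2 : (fun j l => (MvPolynomial.aeval (0 : Fin d × ι → K) :
      MvPolynomial (Fin d × ι) K →ₐ[K] K) (U j l)) = 0 := by
      funext j l; simp [hU]
    rw [h, map_zero, h2, gpol, path_zero] at h1
    exact hdet i h1.symm
  have hQ : Qpol T x0 r rr cc w U ≠ 0 :=
    mul_ne_zero (Finset.prod_ne_zero_iff.mpr fun i _ => hg i) hne
  have hsz := sz _ hQ
  have hdeg := deg_Qpol_le T x0 r rr cc w U (by intro j l; simp [hU]) c hc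
  have hN : 0 < Fintype.card (Fin d × ι → K) := Fintype.card_pos
  obtain ⟨v, hv⟩ : ∃ v, MvPolynomial.eval v (Qpol T x0 r rr cc w U) ≠ 0 := by
    by_contra hcon
    push Not at hcon
    rw [Finset.filter_true_of_mem (fun v _ => hcon v), Finset.card_univ] at hsz
    have := Nat.le_of_mul_le_mul_right hsz hN
    omega
  have h1 := Qpol_map (MvPolynomial.aeval v : MvPolynomial (Fin d × ι) K →ₐ[K] K) T x0 r rr cc w U
  have h2 : Qpol T x0 r rr cc w (fun j l => (MvPolynomial.aeval v :
      MvPolynomial (Fin d × ι) K →ₐ[K] K) (U j l)) ≠ 0 := by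
    rw [← h1]; exact hv
  obtain ⟨u, hu, huZ, -, -⟩ := walk T c x0 hx0 hb r hr hc rr cc hq w _ h2 d le_rfl
  exact right_ne_zero_of_mul hu (mem_Zs.mp huZ w)

end walking

end PRank

namespace PRank

open Finset

section extraction

set_option linter.unusedSectionVars false

variable {K : Type*} [Field K] {ι : Type*} [Fintype ι] [DecidableEq ι] {d : ℕ}

/-- A combinatorial decomposition of a tensor. -/
def HasDec (T : (Fin d → ι) → ι → K) (N : ℕ) : Prop :=
  ∃ (S : Fin N → Finset (Fin d)) (β : Fin N → (Fin d → ι) → K) (γ : Fin N → (Fin d → ι) → ι → K),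
    (∀ t, (S t).Nonempty) ∧
    (∀ t j j', (∀ i ∈ S t, j i = j' i) → β t j = β t j') ∧
    (∀ t j j' w, (∀ i, i ∉ S t → j i = j' i) → γ t j w = γ t j' w) ∧
    ∀ j w, T j w = ∑ t, β t j * γ t j w

lemma hasDec_of_fintype (T : (Fin d → ι) → ι → K) {τ : Type*} [Fintype τ]
    (S : τ → Finset (Fin d)) (β : τ → (Fin d → ι) → K) (γ : τ → (Fin d → ι) → ι → K)
    (h1 : ∀ t, (S t).Nonempty)
    (h2 : ∀ t j j', (∀ i ∈ S t, j i = j' i) → β t j = β t j')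
    (h3 : ∀ t j j' w, (∀ i, i ∉ S t → j i = j' i) → γ t j w = γ t j' w)
    (h4 : ∀ j w, T j w = ∑ t, β t j * γ t j w) : HasDec T (Fintype.card τ) := by
  set e := (Fintype.equivFin τ).symm
  refine ⟨fun t => S (e t), fun t => β (e t), fun t => γ (e t), fun t => h1 _, fun t => h2 _,
    fun t => h3 _, fun j w => ?_⟩
  rw [h4]
  exact (Equiv.sum_comp e (fun t => β t j * γ t j w)).symm

/-- Exponent vectors. -/
noncomputable def mu (V : Finset (Fin d)) (j : Fin d → ι) : Fin d × ι →₀ ℕ :=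
  ∑ i ∈ V, Finsupp.single (i, j i) 1

lemma mu_apply (V : Finset (Fin d)) (j : Fin d → ι) (i : Fin d) (l : ι) :
    mu V j (i, l) = if i ∈ V ∧ j i = l then 1 else 0 := by
  unfold mu
  rw [Finsupp.finsetSum_apply]
  by_cases h : i ∈ V
  · rw [Finset.sum_eq_single_of_mem i h]
    · simp [Finsupp.single_apply, h]
    · intro b _ hb
      simp [hb]
  · rw [Finset.sum_eq_zero]
    · simp [h]
    · intro b hb
      have : b ≠ i := fun h' => h (h' ▸ hb)
      simp [this]

lemma mu_le_iff (V : Finset (Fin d)) (j j' : Fin d → ι) :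
    mu V j' ≤ mu univ j ↔ ∀ i ∈ V, j' i = j i := by
  constructor
  · intro h i hi
    have := h (i, j' i)
    rw [mu_apply, mu_apply] at this
    by_contra hne
    simp [hi, Ne.symm hne] at this
  · rintro h ⟨i, l⟩
    rw [mu_apply, mu_apply]
    by_cases hi : i ∈ V
    · simp [hi, h i hi]
    · simp [hi]

lemma mu_sub (V : Finset (Fin d)) (j j' : Fin d → ι) (h : ∀ i ∈ V, j' i = j i) :
    mu univ j - mu V j' = mu Vᶜ j := by
  ext ⟨i, l⟩
  rw [Finsupp.tsub_apply, mu_apply, mu_apply, mu_apply]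
  by_cases hi : i ∈ V
  · simp [hi, h i hi]
  · simp [hi]

lemma mu_congr (V : Finset (Fin d)) (j j' : Fin d → ι) (h : ∀ i ∈ V, j i = j' i) :
    mu V j = mu V j' :=
  Finset.sum_congr rfl fun i hi => by rw [h i hi]

/-- The coefficient of a monomial in a product of a polynomial with a mixed tensor evaluation. -/
lemma coeff_evM (T : (Fin d → ι) → ι → K) (w : ι) (V : Finset (Fin d))
    (v : Fin d → ι → K) (x : Fin d → ι → MvPolynomial (Fin d × ι) K)
    (hx1 : ∀ i ∈ V, ∀ l, x i l = MvPolynomial.X (i, l)) (hv1 : ∀ i ∈ V, ∀ l, v i l = 1)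
    (hx2 : ∀ i, i ∉ V → ∀ l, x i l = MvPolynomial.C (v i l))
    (F : MvPolynomial (Fin d × ι) K) (j : Fin d → ι) :
    MvPolynomial.coeff (mu univ j) (F * evM (MvPolynomial (Fin d × ι) K) T w x)
      = MvPolynomial.coeff (mu Vᶜ j) F *
        ∑ j' : Fin d → ι, if ∀ i ∈ V, j' i = j i then T j' w * ∏ i, v i (j' i) else 0 := by
  have hprod : ∀ j' : Fin d → ι, algebraMap K (MvPolynomial (Fin d × ι) K) (T j' w) *
      ∏ i, x i (j' i) = MvPolynomial.monomial (mu V j') (T j' w * ∏ i, v i (j' i)) := by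
    intro j'
    have h1 : ∀ i, x i (j' i) = (if i ∈ V then MvPolynomial.X (i, j' i) else 1)
        * MvPolynomial.C (v i (j' i)) := by
      intro i
      by_cases hi : i ∈ V
      · simp [hi, hx1 i hi, hv1 i hi]
      · simp [hi, hx2 i hi]
    simp only [h1]
    rw [Finset.prod_mul_distrib, Finset.prod_ite_mem, Finset.univ_inter, ← map_prod,
      MvPolynomial.algebraMap_eq]
    have h2 : ∏ i ∈ V, (MvPolynomial.X (i, j' i) : MvPolynomial (Fin d × ι) K)
        = MvPolynomial.monomial (mu V j') 1 := by
      unfold mu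
      rw [MvPolynomial.monomial_sum_one]
      rfl
    rw [h2, mul_left_comm, ← map_mul, mul_comm, MvPolynomial.C_mul_monomial, mul_one]
  rw [evM_apply]
  simp only [hprod]
  rw [Finset.mul_sum, MvPolynomial.coeff_sum, Finset.mul_sum]
  refine Finset.sum_congr rfl fun j' _ => ?_
  rw [MvPolynomial.coeff_mul_monomial']
  by_cases h : ∀ i ∈ V, j' i = j i
  · rw [if_pos h, if_pos ((mu_le_iff V j j').mpr h), mu_sub V j j' h]
  · rw [if_neg h, if_neg (fun h' => h ((mu_le_iff V j j').mp h')), mul_zero]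

/-- Extraction of the decomposition. -/
lemma extract (T : (Fin d → ι) → ι → K) (x0 : Fin d → ι → K) (r : Fin d → ℕ)
    (rr cc : ∀ i, Fin (r i) → ι)
    (hdet : ∀ i, ((Lmat T x0 i).submatrix (rr i) (cc i)).det ≠ 0) (c : ℕ) (hc : ∀ i, r i ≤ c)
    (hvan : ∀ w, evM (MvPolynomial (Fin d × ι) K) T w
      (path T x0 r rr cc (fun i l => MvPolynomial.X (i, l)) d) = 0) :
    ∃ N ≤ (c + 2) ^ d, HasDec T N := by
  classical
  set U : Fin d → ι → MvPolynomial (Fin d × ι) K := fun i l => MvPolynomial.X (i, l) with hU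
  set P := fun i : Fin d => Lmat T (path T x0 r rr cc U i) i with hP
  let coef : ∀ i, Option (Option (Fin (r i))) → MvPolynomial (Fin d × ι) K := fun i o =>
    match o with
    | none => 1
    | some none => gpol T x0 r rr cc U i
    | some (some a) => - ((((P i).submatrix (rr i) (cc i)).adjugate.mulVec
        (((P i).submatrix (rr i) id).mulVec (U i))) a)
  let v : ∀ i, Option (Option (Fin (r i))) → ι → K := fun i o =>
    match o with
    | none => x0 i
    | some none => 1
    | some (some a) => Pi.single (cc i a) 1
  let vec : ∀ i, Option (Option (Fin (r i))) → ι → MvPolynomial (Fin d × ι) K := fun i o =>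
    match o with
    | some none => U i
    | o => fun l => MvPolynomial.C (v i o l)
  have hpath : path T x0 r rr cc U d = fun i => ∑ o, coef i o • vec i o := by
    funext i
    rw [path_apply_of_gt _ _ _ _ _ _ _ _ i.2, Fintype.sum_option, Fintype.sum_option]
    funext l
    have hsing : ∀ a, (MvPolynomial.C ((Pi.single (cc i a) (1 : K) : ι → K) l) :
        MvPolynomial (Fin d × ι) K) = (Pi.single (cc i a) 1 : ι → MvPolynomial (Fin d × ι) K) l := by
      intro a
      by_cases h : l = cc i a
      · subst h; simp
      · simp [h]
    simp only [coef, vec, v, cramerProj, Pi.add_apply, Finset.sum_apply, Pi.smul_apply, smul_eq_mul,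
      one_mul, neg_mul, Finset.sum_neg_distrib, gpol, sub_eq_add_neg, hsing]
    rfl
  let V : (∀ i, Option (Option (Fin (r i)))) → Finset (Fin d) := fun o =>
    univ.filter (fun i => o i = some none)
  let β : (∀ i, Option (Option (Fin (r i)))) → (Fin d → ι) → K := fun o j =>
    MvPolynomial.coeff (mu (V o)ᶜ j) (∏ i, coef i (o i))
  let γ : (∀ i, Option (Option (Fin (r i)))) → (Fin d → ι) → ι → K := fun o j w =>
    ∑ j' : Fin d → ι, if ∀ i ∈ V o, j' i = j i then T j' w * ∏ i, v i (o i) (j' i) else 0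
  have hsum : ∀ j w, ∑ o, β o j * γ o j w = 0 := by
    intro j w
    have h1 := hvan w
    rw [hpath, MultilinearMap.map_sum] at h1
    have h2 := congrArg (MvPolynomial.coeff (mu univ j)) h1
    rw [MvPolynomial.coeff_zero, MvPolynomial.coeff_sum] at h2
    rw [← h2]
    refine Finset.sum_congr rfl fun o _ => ?_
    rw [MultilinearMap.map_smul_univ, smul_eq_mul]
    symm
    apply coeff_evM T w (V o) (fun i => v i (o i)) (fun i => vec i (o i))
    · intro i hi l
      have : o i = some none := (mem_filter.mp hi).2
      simp [vec, this, hU]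
    · intro i hi l
      have : o i = some none := (mem_filter.mp hi).2
      simp [v, this]
    · intro i hi l
      have : o i ≠ some none := fun h => hi (mem_filter.mpr ⟨mem_univ _, h⟩)
      rcases ho : o i with _ | _ | a
      · simp [vec]
      · exact absurd ho this
      · simp [vec]
  let main : ∀ i, Option (Option (Fin (r i))) := fun i => some none
  have hVmain : V main = univ := by simp [V, main]
  set g0 : K := MvPolynomial.coeff 0 (∏ i, gpol T x0 r rr cc U i) with hg0
  have hβmain : ∀ j, β main j = g0 := by
    intro j
    simp only [β, hVmain, Finset.compl_univ]
    rw [hg0]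
    simp [mu, coef, main]
  have hγmain : ∀ j w, γ main j w = T j w := by
    intro j w
    simp only [γ, hVmain]
    rw [Finset.sum_eq_single j]
    · simp [v, main]
    · intro b _ hb
      rw [if_neg]
      intro h
      exact hb (funext fun i => h i (mem_univ _))
    · simp
  have hg0ne : g0 ≠ 0 := by
    have h0 : g0 = MvPolynomial.constantCoeff (∏ i, gpol T x0 r rr cc U i) := rfl
    rw [h0, map_prod, Finset.prod_ne_zero_iff]
    intro i _
    have h1 := gpol_map (MvPolynomial.aeval (0 : Fin d × ι → K) :
      MvPolynomial (Fin d × ι) K →ₐ[K] K) T x0 r rr cc U i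
    have h2 : (fun j l => (MvPolynomial.aeval (0 : Fin d × ι → K) :
      MvPolynomial (Fin d × ι) K →ₐ[K] K) (U j l)) = 0 := by
      funext j l; simp [hU]
    rw [h2, MvPolynomial.aeval_zero] at h1
    intro h
    rw [h, gpol, path_zero] at h1
    apply hdet i
    simpa using h1.symm
  refine ⟨Fintype.card {o // o ≠ main}, ?_, ?_⟩
  · refine (Fintype.card_subtype_le _).trans ?_
    rw [Fintype.card_pi]
    calc ∏ i, Fintype.card (Option (Option (Fin (r i)))) ≤ ∏ i : Fin d, (c + 2) := by
          refine Finset.prod_le_prod' fun i _ => ?_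
          have := hc i
          simp only [Fintype.card_option, Fintype.card_fin]
          omega
      _ = _ := by simp
  · apply hasDec_of_fintype T (τ := {o // o ≠ main}) (fun o => (V o.1)ᶜ)
      (fun o j => -(g0⁻¹ * β o.1 j)) (fun o => γ o.1)
    · rintro ⟨o, ho⟩
      by_contra h
      rw [Finset.not_nonempty_iff_eq_empty, Finset.compl_eq_empty_iff] at h
      apply ho
      funext i
      have : i ∈ V o := by rw [h]; exact mem_univ _
      exact (mem_filter.mp this).2
    · rintro ⟨o, ho⟩ j j' h
      simp only [β]
      rw [mu_congr _ j j' h]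
    · rintro ⟨o, ho⟩ j j' w h
      simp only [γ]
      refine Finset.sum_congr rfl fun j'' _ => ?_
      have h' : (∀ i ∈ V o, j'' i = j i) ↔ (∀ i ∈ V o, j'' i = j' i) := by
        refine forall₂_congr fun i hi => ?_
        rw [h i (by simpa using hi)]
      simp only [h']
    · intro j w
      have h1 := hsum j w
      rw [← Finset.add_sum_erase univ _ (mem_univ main), hβmain, hγmain] at h1
      have h2 : ∑ o : {o // o ≠ main}, -(g0⁻¹ * β o.1 j) * γ o.1 j w
          = - (g0⁻¹ * ∑ o ∈ univ.erase main, β o j * γ o j w) := by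
        rw [Finset.mul_sum, ← Finset.sum_neg_distrib]
        rw [← Finset.sum_subtype (univ.erase main) (p := fun o => o ≠ main)
          (by intro o; simp) (fun o => -(g0⁻¹ * β o j) * γ o j w)]
        refine Finset.sum_congr rfl fun o _ => by ring
      rw [h2]
      have h3 : ∑ o ∈ univ.erase main, β o j * γ o j w = - (g0 * T j w) :=
        eq_neg_of_add_eq_zero_right h1
      rw [h3]
      field_simp
      try ring

end extraction

section combined

variable {K : Type*} [Field K] [Fintype K] {ι : Type*} [Fintype ι] [DecidableEq ι] {d : ℕ}

/-- The main structural theorem over a large field. -/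
lemma large_field (T : (Fin d → ι) → ι → K) (c : ℕ) [DecidableEq K]
    (hZ : Fintype.card (Fin d → ι → K) ≤ Fintype.card K ^ c * (Zs T).card)
    (hq1 : 5 ^ d * (d ^ 2 * (c + 1)) + d < Fintype.card K)
    (hq2 : 2 * ((d * c + 1) * (d * ((c + 1) * d + 1) ^ d)) < Fintype.card K) :
    ∃ N ≤ (c + 2) ^ d, HasDec T N := by
  obtain ⟨x0, hx0, hb, hrk⟩ := exists_start T c hZ hq1
  have h : ∀ i, ∃ rr cc : Fin ((Lmat T x0 i).rank) → ι,
      ((Lmat T x0 i).submatrix rr cc).det ≠ 0 := fun i => exists_minor (Lmat T x0 i) _ le_rfl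
  choose rr cc hdet using h
  exact extract T x0 (fun i => (Lmat T x0 i).rank) rr cc hdet c hrk
    (vanish T c x0 hx0 hb _ (fun _ => rfl) hrk rr cc hdet hq2)

end combined

end PRank

namespace PRank

open Finset

section boxes

set_option linter.unusedSectionVars false

/-- Average of a function on a finite type. -/
noncomputable def avg {X : Type*} [Fintype X] (f : X → ℝ) : ℝ :=
  ∑ x, (Fintype.card X : ℝ)⁻¹ * f x

lemma avg_eq {X : Type*} [Fintype X] (f : X → ℝ) : avg f = (Fintype.card X : ℝ)⁻¹ * ∑ x, f x := by
  rw [avg, Finset.mul_sum]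

lemma avg_nonneg {X : Type*} [Fintype X] (f : X → ℝ) (h : ∀ x, 0 ≤ f x) : 0 ≤ avg f := by
  unfold avg
  exact Finset.sum_nonneg fun x _ => mul_nonneg (by positivity) (h x)

lemma avg_mono {X : Type*} [Fintype X] (f g : X → ℝ) (h : ∀ x, f x ≤ g x) : avg f ≤ avg g := by
  unfold avg
  exact Finset.sum_le_sum fun x _ => mul_le_mul_of_nonneg_left (h x) (by positivity)

lemma avg_pow_le {X : Type*} [Fintype X] [Nonempty X] (f : X → ℝ) (h : ∀ x, 0 ≤ f x) (n : ℕ) :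
    avg f ^ n ≤ avg (fun x => f x ^ n) := by
  unfold avg
  apply Real.pow_arith_mean_le_arith_mean_pow
  · intro i _; positivity
  · simp
  · intro i _; exact h i

lemma avg_comm {X Y : Type*} [Fintype X] [Fintype Y] (f : X → Y → ℝ) :
    avg (fun x => avg (fun y => f x y)) = avg (fun y => avg (fun x => f x y)) := by
  simp only [avg_eq]
  simp only [← Finset.mul_sum]
  rw [Finset.sum_comm]
  ring

lemma avg_cons {X : Type*} [Fintype X] {d : ℕ} (f : (Fin (d + 1) → X) → ℝ) :
    avg f = avg (fun a : X => avg (fun x : Fin d → X => f (Fin.cons a x))) := by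
  simp only [avg_eq]
  rw [← (Fin.consEquiv (fun _ : Fin (d + 1) => X)).sum_comp, Fintype.sum_prod_type]
  simp only [← Finset.mul_sum]
  rw [← mul_assoc]
  congr 1
  simp [pow_succ]

lemma avg_pow {X : Type*} [Fintype X] (f : X → ℝ) (m : ℕ) :
    avg f ^ m = avg (fun y : Fin m → X => ∏ l, f (y l)) := by
  simp only [avg_eq]
  rw [mul_pow, Fintype.sum_pow]
  simp

lemma box {X : Type*} [Fintype X] [Nonempty X] (m : ℕ) {d : ℕ} (f : (Fin d → X) → ℝ)
    (hf : ∀ x, 0 ≤ f x) :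
    avg f ^ (m ^ d) ≤ avg (fun y : Fin d → Fin m → X =>
      ∏ l : Fin d → Fin m, f (fun i => y i (l i))) := by
  induction d with
  | zero =>
    have h : ∀ x y : Fin 0 → X, x = y := fun x y => Subsingleton.elim _ _
    simp only [avg_eq]
    simp
    apply le_of_eq
    congr 1
    exact h _ _
  | succ d ih =>
    have h1 : avg f ^ m ≤ avg (fun y0 : Fin m → X => avg (fun x : Fin d → X =>
        ∏ l0, f (Fin.cons (y0 l0) x))) := by
      rw [avg_cons, avg_comm, avg_comm (X := Fin m → X)]
      refine (avg_pow_le _ (fun x => avg_nonneg _ fun _ => hf _) m).trans ?_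
      apply le_of_eq
      congr 1
      funext x
      rw [avg_pow]
    have h0 : 0 ≤ avg f := avg_nonneg _ hf
    rw [pow_succ, mul_comm, pow_mul]
    refine (pow_le_pow_left₀ (pow_nonneg h0 _) h1 _).trans ?_
    refine (avg_pow_le _ (fun y0 => avg_nonneg _ fun x => Finset.prod_nonneg fun _ _ => hf _) _).trans ?_
    rw [avg_cons]
    apply avg_mono
    intro y0
    refine (ih (fun x => ∏ l0, f (Fin.cons (y0 l0) x))
      (fun x => Finset.prod_nonneg fun _ _ => hf _)).trans ?_
    apply avg_mono
    intro y
    apply le_of_eq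
    rw [← (Fin.consEquiv (fun _ : Fin (d + 1) => Fin m)).prod_comp, Fintype.prod_prod_type_right]
    refine Finset.prod_congr rfl fun l _ => Finset.prod_congr rfl fun l0 _ => ?_
    congr 1
    funext i
    refine Fin.cases ?_ (fun i => ?_) i <;> simp [Fin.consEquiv]

end boxes

section extensions

set_option linter.unusedSectionVars false

variable {F K : Type*} [Field F] [Fintype F] [DecidableEq F] [Field K] [Fintype K] [DecidableEq K]
  [Algebra F K] {ι : Type*} [Fintype ι] [DecidableEq ι] {d m : ℕ}

lemma evM_ext (T : (Fin d → ι) → ι → F) (w : ι) (z : Fin d → ι → F) :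
    evM K (fun j w => algebraMap F K (T j w)) w (fun i l => algebraMap F K (z i l))
      = algebraMap F K (evM F T w z) := by
  simp [evM_apply]

lemma evM_box (b : Module.Basis (Fin m) F K) (T : (Fin d → ι) → ι → F)
    (y : Fin d → Fin m → ι → F)
    (h : ∀ l : Fin d → Fin m, (fun i => y i (l i)) ∈ Zs T) :
    (fun i l => ∑ e, b e * algebraMap F K (y i e l)) ∈ Zs (fun j w => algebraMap F K (T j w)) := by
  rw [mem_Zs]
  intro w
  have h1 : (fun i l => ∑ e, b e * algebraMap F K (y i e l))
      = fun i : Fin d => ∑ e, b e • (fun l => algebraMap F K (y i e l)) := by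
    funext i l
    simp [Finset.sum_apply]
  rw [h1, MultilinearMap.map_sum]
  apply Finset.sum_eq_zero
  intro l _
  rw [MultilinearMap.map_smul_univ, evM_ext T w (fun i => y i (l i)), mem_Zs.mp (h l) w]
  simp

lemma density_ext (b : Module.Basis (Fin m) F K) (T : (Fin d → ι) → ι → F) (A : ℕ)
    (hK : Fintype.card F ≤ Fintype.card K)
    (hZ : Fintype.card (Fin d → ι → F) ≤ Fintype.card F ^ A * (Zs T).card) :
    Fintype.card (Fin d → ι → K) ≤ Fintype.card K ^ (A * m ^ d) *
      (Zs (fun j w => algebraMap F K (T j w))).card := by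
  classical
  set f : (Fin d → ι → F) → ℝ := fun x => if x ∈ Zs T then 1 else 0 with hf
  have hf0 : ∀ x, 0 ≤ f x := by intro x; simp only [hf]; split_ifs <;> norm_num
  have hbox := box m f hf0
  have hqpos : (0 : ℝ) < Fintype.card F := by exact_mod_cast Fintype.card_pos
  have hNpos : (0 : ℝ) < Fintype.card (Fin d → ι → F) := by exact_mod_cast Fintype.card_pos
  have hNK : (0 : ℝ) < Fintype.card (Fin d → ι → K) := by exact_mod_cast Fintype.card_pos
  have hlow : ((Fintype.card F : ℝ) ^ A)⁻¹ ≤ avg f := by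
    rw [avg_eq]
    have h1 : ∑ x, f x = ((Zs T).card : ℝ) := by simp [hf]
    rw [h1]
    have h2 : (Fintype.card (Fin d → ι → F) : ℝ) ≤ (Fintype.card F : ℝ) ^ A * (Zs T).card := by
      exact_mod_cast hZ
    rw [inv_mul_eq_div, le_div_iff₀ hNpos, inv_mul_le_iff₀ (by positivity)]
    exact h2
  set B : Finset (Fin d → Fin m → ι → F) :=
    univ.filter (fun y => ∀ l : Fin d → Fin m, (fun i => y i (l i)) ∈ Zs T) with hB
  have hup : avg (fun y : Fin d → Fin m → ι → F => ∏ l : Fin d → Fin m, f (fun i => y i (l i)))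
      = (Fintype.card (Fin d → ι → K) : ℝ)⁻¹ * (B.card : ℝ) := by
    rw [avg_eq]
    have hcard : Fintype.card (Fin d → Fin m → ι → F) = Fintype.card (Fin d → ι → K) := by
      have : Fintype.card K = Fintype.card F ^ m := by
        rw [Module.card_eq_pow_finrank (K := F) (V := K), Module.finrank_eq_card_basis b]
        simp
      simp only [Fintype.card_pi, Finset.prod_const, Finset.card_univ, Fintype.card_fin, this]
      congr 1
      rw [← pow_mul, ← pow_mul, mul_comm]
    rw [hcard]
    congr 1
    have : ∀ y : Fin d → Fin m → ι → F, ∏ l : Fin d → Fin m, f (fun i => y i (l i))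
        = if ∀ l : Fin d → Fin m, (fun i => y i (l i)) ∈ Zs T then 1 else 0 := by
      intro y
      simp only [hf]
      rw [Finset.prod_ite_zero]
      simp
    simp only [this]
    simp [hB]
  have hBZ : B.card ≤ (Zs (fun j w => algebraMap F K (T j w))).card := by
    apply Finset.card_le_card_of_injOn
      (fun y => (fun i l => ∑ e, b e * algebraMap F K (y i e l)))
    · intro y hy
      have hy : y ∈ B := hy
      exact evM_box b T y (mem_filter.mp hy).2
    · intro y _ y' _ hyy
      funext i e l
      have h1 := congrFun (congrFun hyy i) l
      simp only at h1
      have h2 : ∑ e, y i e l • b e = ∑ e, y' i e l • b e := by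
        simpa [Algebra.smul_def, mul_comm] using h1
      have h3 := congrArg (fun k => b.repr k e) h2
      simpa [Finsupp.single_apply] using h3
  rw [hup] at hbox
  have h5 : ((Fintype.card F : ℝ) ^ A)⁻¹ ^ (m ^ d) ≤
      (Fintype.card (Fin d → ι → K) : ℝ)⁻¹ * (B.card : ℝ) :=
    (pow_le_pow_left₀ (by positivity) hlow _).trans hbox
  rw [inv_pow, ← pow_mul, inv_mul_eq_div, le_div_iff₀ hNK, inv_mul_le_iff₀ (by positivity)] at h5
  have h6 : (Fintype.card (Fin d → ι → K) : ℝ) ≤ (Fintype.card K : ℝ) ^ (A * m ^ d) *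
      ((Zs (fun j w => algebraMap F K (T j w))).card : ℝ) := by
    refine h5.trans ?_
    have h7 : (Fintype.card F : ℝ) ≤ Fintype.card K := by exact_mod_cast hK
    have h8 : (B.card : ℝ) ≤ ((Zs (fun j w => algebraMap F K (T j w))).card : ℝ) := by
      exact_mod_cast hBZ
    gcongr
  exact_mod_cast h6

/-- Descent of decompositions. -/
lemma hasDec_descend (b : Module.Basis (Fin m) F K) (T : (Fin d → ι) → ι → F) (N : ℕ)
    (h : HasDec (fun j w => algebraMap F K (T j w)) N) : HasDec T (N * m) := by
  obtain ⟨S, β, γ, h1, h2, h3, h4⟩ := h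
  obtain ⟨τ, hτ⟩ : ∃ τ : K →ₗ[F] F, τ 1 = 1 := by
    obtain ⟨g, hg⟩ := LinearMap.exists_leftInverse_of_injective (Algebra.linearMap F K)
      (LinearMap.ker_eq_bot.mpr (algebraMap F K).injective)
    refine ⟨g, ?_⟩
    have := congrArg (fun f => f 1) hg
    simpa using this
  have hcard : N * m = Fintype.card (Fin N × Fin m) := by simp
  rw [hcard]
  apply hasDec_of_fintype T (τ := Fin N × Fin m) (fun t => S t.1)
    (fun t j => b.repr (β t.1 j) t.2) (fun t j w => τ (b t.2 * γ t.1 j w))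
  · intro t; exact h1 _
  · intro t j j' hj
    rw [h2 t.1 j j' hj]
  · intro t j j' w hj
    rw [h3 t.1 j j' w hj]
  · intro j w
    have h5 : T j w = τ (algebraMap F K (T j w)) := by
      rw [Algebra.algebraMap_eq_smul_one, map_smul, hτ, smul_eq_mul, mul_one]
    have h6 : algebraMap F K (T j w) = ∑ t, β t j * γ t j w := h4 j w
    rw [h5, h6, map_sum, Fintype.sum_prod_type]
    refine Finset.sum_congr rfl fun t _ => ?_
    conv_lhs => rw [← b.sum_repr (β t j), Finset.sum_mul, map_sum]
    refine Finset.sum_congr rfl fun e _ => ?_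
    rw [smul_mul_assoc, map_smul, smul_eq_mul]

end extensions

section combined2

lemma over_any_field {F : Type*} [Field F] [Fintype F] [DecidableEq F] {ι : Type*} [Fintype ι]
    [DecidableEq ι] {d : ℕ}
    (T : (Fin d → ι) → ι → F) (A m : ℕ) (hm : m ≠ 0)
    (hZ : Fintype.card (Fin d → ι → F) ≤ Fintype.card F ^ A * (Zs T).card)
    (hq1 : 5 ^ d * (d ^ 2 * (A * m ^ d + 1)) + d < 2 ^ m)
    (hq2 : 2 * ((d * (A * m ^ d) + 1) * (d * ((A * m ^ d + 1) * d + 1) ^ d)) < 2 ^ m) :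
    ∃ N ≤ (A * m ^ d + 2) ^ d * m, HasDec T N := by
  classical
  obtain ⟨p, hp⟩ := CharP.exists F
  have hpp : Fact p.Prime := ⟨CharP.char_is_prime F p⟩
  have hne : NeZero m := ⟨hm⟩
  let K := FiniteField.Extension F p m
  have hfin : Finite K := inferInstance
  have hft : Fintype K := Fintype.ofFinite K
  have hfr : Module.finrank F K = m := FiniteField.finrank_extension F p m
  have hfd : FiniteDimensional F K := Module.Finite.of_finite
  let b : Module.Basis (Fin m) F K := Module.finBasisOfFinrankEq F K hfr
  have hcard : Fintype.card K = Fintype.card F ^ m := by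
    rw [Module.card_eq_pow_finrank (K := F) (V := K), hfr]
  have hF2 : 2 ≤ Fintype.card F := Fintype.one_lt_card
  have hK : Fintype.card F ≤ Fintype.card K := by
    rw [hcard]
    exact Nat.le_self_pow hm _
  have hK2 : 2 ^ m ≤ Fintype.card K := by
    rw [hcard]
    exact Nat.pow_le_pow_left hF2 _
  have hd := density_ext b T A hK hZ
  obtain ⟨N, hN, hdec⟩ := large_field (fun j w => algebraMap F K (T j w)) (A * m ^ d) hd
    (lt_of_lt_of_le hq1 hK2) (lt_of_lt_of_le hq2 hK2)
  exact ⟨N * m, Nat.mul_le_mul_right _ hN, hasDec_descend b T N hdec⟩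

end combined2

end PRank

namespace PRank

open Finset

section reduction

set_option linter.unusedSectionVars false

lemma sum_comp_surj {A B : Type*} [AddCommGroup A] [AddCommGroup B] [Fintype A] [Fintype B]
    (f : A →+ B) (hf : Function.Surjective f) (g : B → ℂ) :
    (∑ a, g (f a)) / (Fintype.card A : ℂ) = (∑ b, g b) / (Fintype.card B : ℂ) := by
  classical
  set n0 := (univ.filter (fun a => f a = 0)).card with hn0
  have hfib : ∀ b, (univ.filter (fun a => f a = b)).card = n0 := by
    intro b
    obtain ⟨a0, ha0⟩ := hf b
    refine Finset.card_bij' (fun a _ => a - a0) (fun a _ => a + a0) ?_ ?_ ?_ ?_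
    · intro a ha
      have : f a = b := by simpa using ha
      simp [this, ha0]
    · intro a ha
      have : f a = 0 := by simpa using ha
      simp [this, ha0]
    · intro a _; simp
    · intro a _; simp
  have hsum : ∀ h : B → ℂ, ∑ a, h (f a) = n0 * ∑ b, h b := by
    intro h
    rw [← Finset.sum_fiberwise univ f, Finset.mul_sum]
    refine Finset.sum_congr rfl fun b _ => ?_
    rw [← hfib b, ← nsmul_eq_mul]
    rw [← Finset.sum_const]
    refine Finset.sum_congr rfl fun a ha => ?_
    rw [(mem_filter.mp ha).2]
  have hcard : (Fintype.card A : ℂ) = n0 * Fintype.card B := by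
    have := hsum (fun _ => 1)
    simpa using this
  have hA : (Fintype.card A : ℂ) ≠ 0 := by exact_mod_cast Fintype.card_ne_zero
  have hn : (n0 : ℂ) ≠ 0 := by
    intro h; rw [h, zero_mul] at hcard; exact hA hcard
  rw [hsum, hcard, mul_div_mul_left _ _ hn]

variable {F : Type*} [Field F] {ι : Type*} [Fintype ι] [DecidableEq ι] {d : ℕ}

/-- The tensor of a multilinear form. -/
noncomputable def tens (f : MultilinearMap F (fun _ : Fin (d + 1) => ι → F) F) :
    (Fin d → ι) → ι → F := fun j w =>
  f (fun i => Pi.single ((Fin.snocEquiv (fun _ : Fin (d + 1) => ι) (w, j)) i) 1)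

lemma tens_expand (f : MultilinearMap F (fun _ : Fin (d + 1) => ι → F) F) (z : Fin (d + 1) → ι → F) :
    f z = ∑ jj : Fin (d + 1) → ι, tens f (fun i => jj i.castSucc) (jj (Fin.last d)) *
      ∏ i, z i (jj i) := by
  have h1 : z = fun i => ∑ l, z i l • (Pi.single l (1 : F) : ι → F) := by
    funext i
    exact pi_eq_sum_univ' (z i)
  conv_lhs => rw [h1]
  rw [MultilinearMap.map_sum]
  refine Finset.sum_congr rfl fun jj _ => ?_
  rw [MultilinearMap.map_smul_univ, smul_eq_mul, mul_comm]
  congr 1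
  unfold tens
  congr 1
  funext i
  congr 1
  have : (Fin.snocEquiv (fun _ : Fin (d + 1) => ι) (jj (Fin.last d), fun i => jj i.castSucc)) = jj :=
    (Fin.snocEquiv (fun _ : Fin (d + 1) => ι)).apply_symm_apply jj
  rw [this]

lemma tens_expand' (f : MultilinearMap F (fun _ : Fin (d + 1) => ι → F) F) (x : Fin d → ι → F)
    (y : ι → F) :
    f (Fin.snocEquiv (fun _ : Fin (d + 1) => ι → F) (y, x)) = ∑ w, y w * evM F (tens f) w x := by
  rw [tens_expand, ← (Fin.snocEquiv (fun _ : Fin (d + 1) => ι)).sum_comp, Fintype.sum_prod_type]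
  refine Finset.sum_congr rfl fun w _ => ?_
  rw [evM_apply, Finset.mul_sum]
  refine Finset.sum_congr rfl fun j _ => ?_
  rw [Fin.prod_univ_castSucc]
  simp [Fin.snocEquiv]
  ring

lemma sum_char [Fintype F] [DecidableEq F] (χ : AddChar F ℂ) (hχ : χ ≠ 1) (c : ι → F) :
    ∑ y : ι → F, χ (∑ w, y w * c w) = if c = 0 then (Fintype.card (ι → F) : ℂ) else 0 := by
  classical
  let L : (ι → F) →+ F := 
    { toFun := fun y => ∑ w, y w * c w
      map_zero' := by simp
      map_add' := by intro x y; simp [add_mul, Finset.sum_add_distrib] }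
  have h := AddChar.sum_eq_ite (χ.compAddMonoidHom L)
  have h1 : (χ.compAddMonoidHom L = 0) ↔ c = 0 := by
    constructor
    · intro h0
      by_contra hc
      obtain ⟨w, hw⟩ := Function.ne_iff.mp hc
      apply hχ
      ext t
      have h2 := DFunLike.congr_fun h0 (Pi.single w (t / c w))
      simp only [AddChar.compAddMonoidHom_apply, AddChar.zero_apply] at h2
      have h3 : L (Pi.single w (t / c w)) = t := by
        change ∑ w', (Pi.single w (t / c w) : ι → F) w' * c w' = t
        rw [Finset.sum_eq_single w]
        · simp; exact div_mul_cancel₀ _ hw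
        · intro b _ hb; simp [hb]
        · simp
      rw [h3] at h2
      simpa using h2
    · rintro rfl
      ext y
      have : L y = 0 := by
        change ∑ w', y w' * (0 : ι → F) w' = 0
        simp
      simp [this]
  simp only [h1] at h
  exact h

lemma bias_eq [Fintype F] [DecidableEq F] (χ : AddChar F ℂ) (hχ : χ ≠ 1)
    (f : MultilinearMap F (fun _ : Fin (d + 1) => ι → F) F) :
    (∑ z, χ (f z)) / (Fintype.card (Fin (d + 1) → ι → F) : ℂ)
      = ((Zs (tens f)).card : ℂ) / (Fintype.card (Fin d → ι → F) : ℂ) := by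
  rw [← (Fin.snocEquiv (fun _ : Fin (d + 1) => ι → F)).sum_comp, Fintype.sum_prod_type_right]
  have h1 : ∀ x : Fin d → ι → F, ∑ y : ι → F,
      χ (f (Fin.snocEquiv (fun _ : Fin (d + 1) => ι → F) (y, x)))
      = if x ∈ Zs (tens f) then (Fintype.card (ι → F) : ℂ) else 0 := by
    intro x
    simp only [tens_expand']
    rw [sum_char χ hχ (fun w => evM F (tens f) w x)]
    simp only [mem_Zs, funext_iff, Pi.zero_apply]
  have h2 : ∀ x : Fin d → ι → F, ∑ y : (fun _ : Fin (d + 1) => ι → F) (Fin.last d),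
      χ (f (Fin.snocEquiv (fun _ : Fin (d + 1) => ι → F) (y, x)))
      = if x ∈ Zs (tens f) then (Fintype.card (ι → F) : ℂ) else 0 := h1
  rw [Finset.sum_congr rfl (fun x _ => h2 x)]
  rw [Finset.sum_ite_mem, Finset.univ_inter, Finset.sum_const, nsmul_eq_mul]
  have hne : (Fintype.card (ι → F) : ℂ) ≠ 0 := by exact_mod_cast Fintype.card_ne_zero
  have h3 : (Fintype.card (Fin (d + 1) → ι → F) : ℂ)
      = Fintype.card (Fin d → ι → F) * Fintype.card (ι → F) := by
    simp [pow_succ]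
  rw [h3, mul_div_mul_right _ _ hne]

/-- A multilinear form with given coefficients on a subset of the coordinates. -/
noncomputable def mlin {k : ℕ} {G : Fin k → Type*} [∀ i, AddCommGroup (G i)] [∀ i, Module F (G i)]
    (s : ∀ i, G i →ₗ[F] (ι → F)) (I : Finset (Fin k)) (b : (↥I → ι) → F) :
    MultilinearMap F (fun j : ↥I => G j.1) F :=
  ∑ p : ↥I → ι, b p • (MultilinearMap.mkPiAlgebra F ↥I F).compLinearMap
    (fun i => (LinearMap.proj (p i)).comp (s i.1))

lemma mlin_apply {k : ℕ} {G : Fin k → Type*} [∀ i, AddCommGroup (G i)] [∀ i, Module F (G i)]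
    (s : ∀ i, G i →ₗ[F] (ι → F)) (I : Finset (Fin k)) (b : (↥I → ι) → F) (x : ∀ j : ↥I, G j.1) :
    mlin s I b x = ∑ p : ↥I → ι, b p * ∏ i : ↥I, s i.1 (x i) (p i) := by
  simp [mlin]

/-- Gluing functions. -/
def glue {k : ℕ} (I : Finset (Fin k)) : (Fin k → ι) ≃ (↥I → ι) × (↥(Iᶜ) → ι) where
  toFun jj := (fun i => jj i.1, fun i => jj i.1)
  invFun p := fun i => if h : i ∈ I then p.1 ⟨i, h⟩ else p.2 ⟨i, Finset.mem_compl.mpr h⟩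
  left_inv jj := by
    funext i
    simp
  right_inv p := by
    ext i
    · simp
    · have := Finset.mem_compl.mp i.2
      simp [this]

lemma mul_expand {k : ℕ} (I : Finset (Fin k)) (b : (↥I → ι) → F) (g : (↥(Iᶜ) → ι) → F)
    (z : Fin k → ι → F) :
    (∑ p : ↥I → ι, b p * ∏ i : ↥I, z i.1 (p i)) * (∑ p : ↥(Iᶜ) → ι, g p * ∏ i : ↥(Iᶜ), z i.1 (p i))
      = ∑ jj : Fin k → ι, b (fun i => jj i.1) * g (fun i => jj i.1) * ∏ i, z i (jj i) := by
  rw [Finset.sum_mul_sum, ← Fintype.sum_prod_type', ← (glue I).sum_comp]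
  refine Finset.sum_congr rfl fun jj _ => ?_
  have h1 : ∏ i, z i (jj i) = (∏ i : ↥I, z i.1 (jj i.1)) * ∏ i : ↥(Iᶜ), z i.1 (jj i.1) := by
    rw [Finset.prod_coe_sort I (fun i => z i (jj i)), Finset.prod_coe_sort Iᶜ (fun i => z i (jj i)),
      Finset.prod_mul_prod_compl]
  rw [h1]
  simp only [glue, Equiv.coe_fn_mk]
  ring

lemma hasDec_back {G : Fin (d + 1) → Type*} [∀ i, AddCommGroup (G i)] [∀ i, Module F (G i)]
    (s : ∀ i, G i →ₗ[F] (ι → F)) (π : ∀ i, (ι → F) →ₗ[F] G i) (hπ : ∀ i x, π i (s i x) = x)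
    (α : MultilinearMap F G F) (N : ℕ) (h : HasDec (tens (α.compLinearMap π)) N) :
    ∃ (I : Fin N → Finset (Fin (d + 1)))
      (β : ∀ i, MultilinearMap F (fun j : ↥(I i) => G j.1) F)
      (γ : ∀ i, MultilinearMap F (fun j : ↥((I i)ᶜ) => G j.1) F),
      (∀ i, (I i).Nonempty ∧ I i ≠ Finset.univ) ∧
      ∀ x : ∀ i, G i, α x = ∑ i, β i (fun j => x j.1) * γ i (fun j => x j.1) := by
  obtain ⟨S, β, γ, h1, h2, h3, h4⟩ := h
  choose i0 hi0 using h1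
  let I : Fin N → Finset (Fin (d + 1)) := fun t => (S t).map Fin.castSuccEmb
  have hmem : ∀ t i, i.castSucc ∈ I t ↔ i ∈ S t := by
    intro t i
    simp [I]
  have hlast : ∀ t, Fin.last d ∉ I t := by
    intro t h
    simp [I] at h
  have hlast' : ∀ t, Fin.last d ∈ (I t)ᶜ := fun t => Finset.mem_compl.mpr (hlast t)
  let b : ∀ t, (↥(I t) → ι) → F := fun t p => β t (fun i =>
    if h : i.castSucc ∈ I t then p ⟨_, h⟩ else p ⟨(i0 t).castSucc, (hmem t _).mpr (hi0 t)⟩)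
  let g : ∀ t, (↥((I t)ᶜ) → ι) → F := fun t p => γ t (fun i =>
    if h : i.castSucc ∈ (I t)ᶜ then p ⟨_, h⟩ else p ⟨Fin.last d, hlast' t⟩) (p ⟨Fin.last d, hlast' t⟩)
  refine ⟨I, fun t => mlin s (I t) (b t), fun t => mlin s (I t)ᶜ (g t), ?_, ?_⟩
  · intro t
    refine ⟨⟨_, (hmem t _).mpr (hi0 t)⟩, fun h => hlast t ?_⟩
    rw [h]; exact mem_univ _
  · intro x
    have hx : α x = (α.compLinearMap π) (fun i => s i (x i)) := by
      simp [MultilinearMap.compLinearMap_apply, hπ]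
    rw [hx, tens_expand]
    simp only [mlin_apply]
    have h5 : ∀ t, (∑ p : ↥(I t) → ι, b t p * ∏ i : ↥(I t), s i.1 (x i.1) (p i)) *
        (∑ p : ↥((I t)ᶜ) → ι, g t p * ∏ i : ↥((I t)ᶜ), s i.1 (x i.1) (p i))
        = ∑ jj : Fin (d + 1) → ι, (β t (fun i => jj i.castSucc) *
          γ t (fun i => jj i.castSucc) (jj (Fin.last d))) * ∏ i, s i (x i) (jj i) := by
      intro t
      rw [mul_expand (I t) (b t) (g t) (fun i => s i (x i))]
      refine Finset.sum_congr rfl fun jj _ => ?_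
      congr 2
      · apply h2
        intro i hi
        rw [dif_pos ((hmem t i).mpr hi)]
      · apply h3
        intro i hi
        rw [dif_pos (Finset.mem_compl.mpr (fun h => hi ((hmem t i).mp h)))]
    rw [Finset.sum_congr rfl (fun t _ => h5 t), Finset.sum_comm]
    refine Finset.sum_congr rfl fun jj _ => ?_
    rw [h4, Finset.sum_mul]

end reduction

end PRank

namespace PRank

open Finset

section final

set_option linter.unusedSectionVars false

lemma exists_m0 (d : ℕ) : ∃ m0 : ℕ, m0 ≠ 0 ∧ ∀ m, m0 ≤ m → ∀ A, A ≤ m →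
    5 ^ d * (d ^ 2 * (A * m ^ d + 1)) + d < 2 ^ m ∧
    2 * ((d * (A * m ^ d) + 1) * (d * ((A * m ^ d + 1) * d + 1) ^ d)) < 2 ^ m := by
  set C : ℕ := (5 ^ d * (d ^ 2 * 2) + d) + 2 * ((d + 1) * (d * (2 * d + 1) ^ d)) with hC
  have ht := tendsto_pow_const_div_const_pow_of_one_lt ((d + 1) * (d + 1)) (r := (2 : ℝ)) (by norm_num)
  have hev := ht.eventually (gt_mem_nhds (show (0 : ℝ) < ((C : ℝ) + 1)⁻¹ by positivity))
  obtain ⟨m1, hm1⟩ := Filter.eventually_atTop.mp hev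
  refine ⟨m1 + 1, by omega, fun m hm A hA => ?_⟩
  have hmpos : 1 ≤ m := by omega
  have hkey : C * m ^ ((d + 1) * (d + 1)) < 2 ^ m := by
    have h1 := hm1 m (by omega)
    rw [div_lt_iff₀ (by positivity), lt_inv_mul_iff₀ (by positivity)] at h1
    have h2 : ((C + 1 : ℕ) : ℝ) * (m : ℝ) ^ ((d + 1) * (d + 1)) < 2 ^ m := by
      push_cast; exact h1
    have h3 : (C + 1) * m ^ ((d + 1) * (d + 1)) < 2 ^ m := by exact_mod_cast h2
    exact lt_of_le_of_lt (Nat.mul_le_mul_right _ (by omega)) h3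
  set M := m ^ (d + 1) with hM
  have hM1 : 1 ≤ M := Nat.one_le_pow _ _ hmpos
  have hc : A * m ^ d ≤ M := by
    rw [hM, pow_succ, mul_comm]
    exact Nat.mul_le_mul_left _ hA
  have hME : m ^ ((d + 1) * (d + 1)) = M * M ^ d := by
    rw [pow_mul, ← hM, pow_succ, mul_comm]
  have hMd : 1 ≤ M ^ d := Nat.one_le_pow _ _ hM1
  rw [hME] at hkey
  have hA1 : 5 ^ d * (d ^ 2 * (A * m ^ d + 1)) + d ≤ (5 ^ d * (d ^ 2 * 2) + d) * (M * M ^ d) := by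
    have h1 : A * m ^ d + 1 ≤ 2 * (M * M ^ d) := by nlinarith
    have h2 : 1 ≤ M * M ^ d := by nlinarith
    calc _ ≤ 5 ^ d * (d ^ 2 * (2 * (M * M ^ d))) + d * (M * M ^ d) := by
          gcongr
          exact Nat.le_mul_of_pos_right _ h2
      _ = _ := by ring
  have hA2 : 2 * ((d * (A * m ^ d) + 1) * (d * ((A * m ^ d + 1) * d + 1) ^ d))
      ≤ 2 * ((d + 1) * (d * (2 * d + 1) ^ d)) * (M * M ^ d) := by
    have h1 : d * (A * m ^ d) + 1 ≤ (d + 1) * M := by nlinarith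
    have h2 : (A * m ^ d + 1) * d + 1 ≤ (2 * d + 1) * M := by nlinarith
    calc _ ≤ 2 * (((d + 1) * M) * (d * ((2 * d + 1) * M) ^ d)) := by gcongr
      _ = _ := by rw [mul_pow]; ring
  have hs : (5 ^ d * (d ^ 2 * 2) + d) * (M * M ^ d) + 2 * ((d + 1) * (d * (2 * d + 1) ^ d)) * (M * M ^ d)
      = C * (M * M ^ d) := by rw [hC]; ring
  constructor
  · omega
  · omega

lemma reduction_main {F : Type} [Field F] [Fintype F] {d : ℕ}
    (G : Fin (d + 1) → Type) [∀ i, AddCommGroup (G i)] [∀ i, Module F (G i)]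
    [∀ i, Fintype (G i)] [∀ i, FiniteDimensional F (G i)]
    (χ : AddChar F ℂ) (hχ : χ ≠ 1) (α : MultilinearMap F G F) (a : ℝ)
    (h : (Fintype.card F : ℝ) ^ (-a) ≤
        (((∑ x : ∀ i, G i, χ (α x)) / (Fintype.card (∀ i, G i) : ℂ)).re)) (A m : ℕ) (hA : a ≤ A)
    (hm : m ≠ 0)
    (hq1 : 5 ^ d * (d ^ 2 * (A * m ^ d + 1)) + d < 2 ^ m)
    (hq2 : 2 * ((d * (A * m ^ d) + 1) * (d * ((A * m ^ d + 1) * d + 1) ^ d)) < 2 ^ m) :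
    ∃ N ≤ (A * m ^ d + 2) ^ d * m,
    ∃ (I : Fin N → Finset (Fin (d + 1)))
      (β : ∀ i, MultilinearMap F (fun j : ↥(I i) => G j.1) F)
      (γ : ∀ i, MultilinearMap F (fun j : ↥((I i)ᶜ) => G j.1) F),
      (∀ i, (I i).Nonempty ∧ I i ≠ Finset.univ) ∧
      ∀ x : ∀ i, G i, α x = ∑ i, β i (fun j => x j.1) * γ i (fun j => x j.1) := by
  classical
  let V := ∀ i, G i
  let e : V ≃ₗ[F] (Fin (Module.finrank F V) → F) := (Module.finBasis F V).equivFun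
  let s : ∀ i, G i →ₗ[F] (Fin (Module.finrank F V) → F) := fun i =>
    e.toLinearMap.comp (LinearMap.single F G i)
  let π : ∀ i, (Fin (Module.finrank F V) → F) →ₗ[F] G i := fun i =>
    (LinearMap.proj i).comp e.symm.toLinearMap
  have hπ : ∀ i x, π i (s i x) = x := by
    intro i x
    simp [π, s]
    exact Pi.single_eq_same i x
  let f := α.compLinearMap π
  let Φ : (Fin (d + 1) → Fin (Module.finrank F V) → F) →+ (∀ i, G i) :=
    { toFun := fun z i => π i (z i)
      map_zero' := by funext i; simp
      map_add' := by intro x y; funext i; simp }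
  have hΦ : Function.Surjective Φ := by
    intro x
    refine ⟨fun i => s i (x i), ?_⟩
    funext i
    exact hπ i (x i)
  have hb := sum_comp_surj Φ hΦ (fun x => χ (α x))
  have hb2 := bias_eq χ hχ f
  have hb3 : ∑ z, χ (f z) = ∑ z, χ (α (Φ z)) := rfl
  rw [← hb, ← hb3, hb2] at h
  have hre : (((Zs (tens f)).card : ℂ) / (Fintype.card (Fin d → Fin (Module.finrank F V) → F) : ℂ)).re
      = ((Zs (tens f)).card : ℝ) / (Fintype.card (Fin d → Fin (Module.finrank F V) → F) : ℝ) := by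
    rw [← Complex.ofReal_natCast, ← Complex.ofReal_natCast, ← Complex.ofReal_div, Complex.ofReal_re]
  rw [hre] at h
  have hN : (0 : ℝ) < (Fintype.card (Fin d → Fin (Module.finrank F V) → F) : ℝ) := by
    exact_mod_cast Fintype.card_pos
  have hq1' : (1 : ℝ) ≤ (Fintype.card F : ℝ) := by
    exact_mod_cast (Fintype.one_lt_card (α := F)).le
  have hqpos : (0 : ℝ) < (Fintype.card F : ℝ) := by linarith
  have hlow : ((Fintype.card F : ℝ) ^ A)⁻¹ ≤ (Fintype.card F : ℝ) ^ (-a) := by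
    rw [← Real.rpow_natCast, ← Real.rpow_neg hqpos.le]
    exact Real.rpow_le_rpow_of_exponent_le hq1' (by linarith)
  have h2 := hlow.trans h
  rw [le_div_iff₀ hN, inv_mul_le_iff₀ (by positivity)] at h2
  have hZ : Fintype.card (Fin d → Fin (Module.finrank F V) → F)
      ≤ Fintype.card F ^ A * (Zs (tens f)).card := by
    exact_mod_cast h2
  obtain ⟨N, hN, hdec⟩ := over_any_field (tens f) A m hm hZ hq1 hq2
  exact ⟨N, hN, hasDec_back s π hπ α N hdec⟩

end final

end PRank

theorem partition_rank_poly_bound_of_analytic_rank :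
    ∀ k : ℕ, 0 < k → ∃ C D : ℝ, 0 < C ∧ 0 < D ∧
      ∀ (𝔽 : Type) [Field 𝔽] [Fintype 𝔽]
        (G : Fin k → Type) [∀ i, AddCommGroup (G i)] [∀ i, Module 𝔽 (G i)]
        [∀ i, Fintype (G i)] [∀ i, FiniteDimensional 𝔽 (G i)]
        (χ : AddChar 𝔽 ℂ), χ ≠ 1 →
      ∀ (α : MultilinearMap 𝔽 G 𝔽) (a : ℝ), 0 ≤ a →
      (Fintype.card 𝔽 : ℝ) ^ (-a) ≤
        (((∑ x : ∀ i, G i, χ (α x)) / (Fintype.card (∀ i, G i) : ℂ)).re) →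
      ∃ r : ℕ,
        (r : ℝ) ≤ C * (a ^ D + 1) ∧
        ∃ (I : Fin r → Finset (Fin k))
          (β : ∀ i, MultilinearMap 𝔽 (fun j : ↥(I i) => G j.1) 𝔽)
          (γ : ∀ i, MultilinearMap 𝔽 (fun j : ↥((I i)ᶜ) => G j.1) 𝔽),
          (∀ i, (I i).Nonempty ∧ I i ≠ Finset.univ) ∧
          ∀ x : ∀ i, G i, α x = ∑ i, β i (fun j => x j.1) * γ i (fun j => x j.1) := by
  intro k hk
  obtain ⟨d, rfl⟩ : ∃ d, k = d + 1 := ⟨k - 1, by omega⟩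
  obtain ⟨m0, hm0, hbig⟩ := PRank.exists_m0 d
  set E : ℕ := (d + 1) * d + 1 with hE
  set B : ℝ := 1 + m0 with hB
  have hB1 : 1 ≤ B := by rw [hB]; have : (0 : ℝ) ≤ m0 := Nat.cast_nonneg _; linarith
  refine ⟨3 ^ d * (2 ^ (E - 1) * B ^ E), (E : ℝ), by positivity, by positivity, ?_⟩
  intro 𝔽 _ _ G _ _ _ _ χ hχ α a ha h
  set A := ⌈a⌉₊ with hA
  set m := A + m0 with hm
  obtain ⟨hq1, hq2⟩ := hbig m (by omega) A (by omega)
  obtain ⟨N, hN, hdec⟩ := PRank.reduction_main G χ hχ α a h A m (Nat.le_ceil a) (by omega) hq1 hq2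
  refine ⟨N, ?_, hdec⟩
  have hmpos : 1 ≤ m := by omega
  have h1 : N ≤ 3 ^ d * m ^ E := by
    refine hN.trans ?_
    have hM1 : 1 ≤ m ^ (d + 1) := Nat.one_le_pow _ _ hmpos
    have hc : A * m ^ d ≤ m ^ (d + 1) := by
      rw [pow_succ, mul_comm]
      exact Nat.mul_le_mul_left _ (by omega)
    calc (A * m ^ d + 2) ^ d * m ≤ (3 * m ^ (d + 1)) ^ d * m := by
          gcongr
          omega
      _ = 3 ^ d * m ^ E := by rw [hE, mul_pow, ← pow_mul, pow_succ]; ring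
  have h2 : (m : ℝ) ≤ a + B := by
    have := (Nat.ceil_lt_add_one ha).le
    rw [hm, hB]
    push_cast
    linarith
  have h3 : (N : ℝ) ≤ 3 ^ d * (m : ℝ) ^ E := by exact_mod_cast h1
  have h4 : (m : ℝ) ^ E ≤ 2 ^ (E - 1) * (a ^ E + B ^ E) :=
    (pow_le_pow_left₀ (Nat.cast_nonneg _) h2 _).trans (add_pow_le ha (by linarith) E)
  have h5 : a ^ E + B ^ E ≤ B ^ E * (a ^ E + 1) := by
    have h6 : 1 ≤ B ^ E := one_le_pow₀ hB1
    have h7 : 0 ≤ a ^ E := by positivity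
    nlinarith
  rw [Real.rpow_natCast]
  calc (N : ℝ) ≤ 3 ^ d * (m : ℝ) ^ E := h3
    _ ≤ 3 ^ d * (2 ^ (E - 1) * (B ^ E * (a ^ E + 1))) := by
        gcongr
        exact h4.trans (by gcongr)
    _ = _ := by ring
end

section
/- For every positive integer k there exist constants C, D > 0 depending only on k with the following property: let α : G_1 × ⋯ × G_k → 𝔽 be a multilinear form with 𝔼_{x_1,…,x_k} χ(α(x_1,…,x_k)) ≥ c for some c > 0. Then there exist r ≤ C·(log_{|𝔽|}(|𝔽|·c^{-1}))^D, nonempty sets I_1, …, I_r ⊆ [k−1], and multilinear forms β_i : ∏_{j∈I_i} G_j → 𝔽 for i ∈ [r], such that every point x ∈ G_1 × ⋯ × G_k satisfying β_i(x_{I_i}) = 0 for all i ∈ [r] also satisfies α(x) = 0. -/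
open Finset Function

lemma sum_dummy {ι V : Type*} [Fintype ι] [DecidableEq ι] [Fintype V] {M : Type*} [AddCommMonoid M]
    (j : ι) (F : (ι → V) → M) :
    ∑ u : ι → V, ∑ v : V, F (update u j v) = Fintype.card V • ∑ u : ι → V, F u := by
  classical
  have hinv : Function.Involutive
      (fun p : (ι → V) × V => ((update p.1 j p.2, p.1 j) : (ι → V) × V)) := by
    rintro ⟨u, v⟩
    simp
  rw [← Fintype.sum_prod_type' (f := fun u v => F (update u j v))]
  rw [Fintype.sum_equiv hinv.toPerm (fun p : (ι → V) × V => F (update p.1 j p.2))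
    (fun p => F p.1) (fun p => rfl)]
  rw [Fintype.sum_prod_type_right (f := fun p : (ι → V) × V => F p.1)]
  simp

section
variable {ι 𝔽 V : Type*} {G : ι → Type*} [Fintype ι] [DecidableEq ι] [Field 𝔽]
  [∀ i, AddCommGroup (G i)] [∀ i, Module 𝔽 (G i)] [AddCommGroup V] [Module 𝔽 V] [Fintype V]

lemma char_sum_nonneg (χ : AddChar 𝔽 ℂ) (L : V →ₗ[𝔽] 𝔽) :
    ∃ s : ℝ, 0 ≤ s ∧ ∑ v : V, χ (L v) = (s : ℂ) := by
  classical
  have h := AddChar.sum_eq_ite (χ.compAddMonoidHom L.toAddMonoidHom)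
  have h2 : ∑ v : V, χ (L v) = ∑ v : V, (χ.compAddMonoidHom L.toAddMonoidHom) v := by
    rfl
  rw [h2, h]
  split_ifs
  · exact ⟨Fintype.card V, by positivity, by simp⟩
  · exact ⟨0, le_rfl, by simp⟩

lemma bias_step [Finite 𝔽] (χ : AddChar 𝔽 ℂ) (α : MultilinearMap 𝔽 G 𝔽) (φ : ∀ i, V →ₗ[𝔽] G i)
    (x : ∀ i, G i) (j : ι) :
    ‖∑ u : ι → V, χ (α (fun i => x i + φ i (u i)))‖ ≤
      ‖∑ u : ι → V, χ (α (fun i => update x j 0 i + φ i (u i)))‖ := by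
  have hc : (0 : ℝ) < Fintype.card V := by exact_mod_cast Fintype.card_pos
  let L : (ι → V) → V →ₗ[𝔽] 𝔽 := fun u =>
    (α.toLinearMap (fun i => x i + φ i (u i)) j).comp (φ j)
  have e1 : ∀ u v, α (fun i => x i + φ i (update u j v i)) =
      α (update (fun i => x i + φ i (u i)) j (x j)) + L u v := by
    intro u v
    have : (fun i => x i + φ i (update u j v i)) =
        update (fun i => x i + φ i (u i)) j (x j + φ j v) := by
      ext i
      by_cases h : i = j
      · subst h; simp
      · simp [h]
    rw [this, α.map_update_add]
    rfl
  have e2 : ∀ u v, α (fun i => update x j 0 i + φ i (update u j v i)) = L u v := by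
    intro u v
    have : (fun i => update x j 0 i + φ i (update u j v i)) =
        update (fun i => x i + φ i (u i)) j (φ j v) := by
      ext i
      by_cases h : i = j
      · subst h; simp
      · simp [h]
    rw [this]
    rfl
  choose s hs0 hs using fun u => char_sum_nonneg χ (L u)
  have d1 := sum_dummy j (fun u : ι → V => χ (α (fun i => x i + φ i (u i))))
  have d2 := sum_dummy j (fun u : ι → V => χ (α (fun i => update x j 0 i + φ i (u i))))
  simp only [e1, e2, AddChar.map_add_eq_mul, ← Finset.mul_sum, hs, nsmul_eq_mul] at d1 d2
  refine le_of_mul_le_mul_left ?_ hc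
  have n1 : ∀ z : ℂ, (Fintype.card V : ℝ) * ‖z‖ = ‖(Fintype.card V : ℂ) * z‖ := by
    intro z; simp
  rw [n1, n1, ← d1, ← d2]
  refine (norm_sum_le _ _).trans ?_
  rw [← Complex.ofReal_sum, Complex.norm_of_nonneg (Finset.sum_nonneg fun u _ => hs0 u)]
  refine Finset.sum_le_sum fun u _ => ?_
  rw [norm_mul, Complex.norm_of_nonneg (hs0 u)]
  have : ‖χ (α (update (fun i => x i + φ i (u i)) j (x j)))‖ = 1 := AddChar.norm_apply _ _
  rw [this, one_mul]

lemma bias_le [Finite 𝔽] (χ : AddChar 𝔽 ℂ) (α : MultilinearMap 𝔽 G 𝔽) (φ : ∀ i, V →ₗ[𝔽] G i)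
    (x : ∀ i, G i) :
    ‖∑ u : ι → V, χ (α (fun i => x i + φ i (u i)))‖ ≤
      ‖∑ u : ι → V, χ (α (fun i => φ i (u i)))‖ := by
  classical
  have key : ∀ S : Finset ι, ‖∑ u : ι → V, χ (α (fun i => x i + φ i (u i)))‖ ≤
      ‖∑ u : ι → V, χ (α (fun i => S.piecewise (0 : ∀ i, G i) x i + φ i (u i)))‖ := by
    intro S
    induction S using Finset.induction_on with
    | empty => simp
    | insert j S hj ih =>
      refine ih.trans ((bias_step χ α φ _ j).trans (le_of_eq ?_))
      rw [Finset.piecewise_insert]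
      rfl
  simpa using key univ

lemma bias_avg [Finite 𝔽] [∀ i, Fintype (G i)] (χ : AddChar 𝔽 ℂ) (α : MultilinearMap 𝔽 G 𝔽)
    (φ : ∀ i, V →ₗ[𝔽] G i) :
    (Fintype.card (ι → V) : ℝ) * ‖∑ x : ∀ i, G i, χ (α x)‖ ≤
      Fintype.card (∀ i, G i) * ‖∑ u : ι → V, χ (α (fun i => φ i (u i)))‖ := by
  have h : ∑ x : ∀ i, G i, ∑ u : ι → V, χ (α (fun i => x i + φ i (u i))) =
      Fintype.card (ι → V) * ∑ x : ∀ i, G i, χ (α x) := by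
    rw [Finset.sum_comm]
    have : ∀ u : ι → V, ∑ x : ∀ i, G i, χ (α (fun i => x i + φ i (u i))) =
        ∑ x : ∀ i, G i, χ (α x) := by
      intro u
      exact Fintype.sum_equiv (Equiv.addRight (fun i => φ i (u i))) _ _ (fun x => rfl)
    simp only [this]
    simp
  have h2 := congrArg norm h
  rw [norm_mul, Complex.norm_natCast] at h2
  rw [← h2]
  refine (norm_sum_le _ _).trans ?_
  refine (Finset.sum_le_sum fun x _ => bias_le χ α φ x).trans ?_
  simp

/-- combination of the points `P l`. -/
def comb {t : ℕ} (P : Fin t → ∀ i, G i) (u : Fin t → ι → 𝔽) : ∀ i, G i :=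
  fun i => ∑ l, u l i • P l i

open Classical in
/-- number of common zeros. -/
noncomputable def zeroCount [Fintype 𝔽] (α : MultilinearMap 𝔽 G 𝔽) (i₀ : ι) {t : ℕ} (P : Fin t → ∀ i, G i) : ℕ :=
  #{u : Fin t → ι → 𝔽 | ∀ l, α (update (comb P u) i₀ (P l i₀)) = 0}

lemma bias_le_zeroCount [Fintype 𝔽] (χ : AddChar 𝔽 ℂ) (hχ : χ ≠ 1) (α : MultilinearMap 𝔽 G 𝔽)
    (i₀ : ι) {t : ℕ} (P : Fin t → ∀ i, G i) :
    ‖∑ u : ι → Fin t → 𝔽, χ (α (fun i => ∑ l, u i l • P l i))‖ ≤ zeroCount α i₀ P := by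
  classical
  have hc : (0 : ℝ) < Fintype.card (Fin t → 𝔽) := by exact_mod_cast Fintype.card_pos
  have d1 := sum_dummy i₀ (fun u : ι → Fin t → 𝔽 => χ (α (fun i => ∑ l, u i l • P l i)))
  have e1 : ∀ (u : ι → Fin t → 𝔽) v, α (fun i => ∑ l, update u i₀ v i l • P l i) =
      ∑ l, v l * α (update (comb P (fun l i => u i l)) i₀ (P l i₀)) := by
    intro u v
    have : (fun i => ∑ l, update u i₀ v i l • P l i) =
        update (comb P (fun l i => u i l)) i₀ (∑ l, v l • P l i₀) := by
      ext i
      by_cases h : i = i₀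
      · subst h; simp
      · simp [h, comb]
    rw [this, α.map_update_sum]
    simp only [α.map_update_smul, smul_eq_mul]
  have e2 : ∀ u : ι → Fin t → 𝔽, ∑ v : Fin t → 𝔽, χ (α (fun i => ∑ l, update u i₀ v i l • P l i)) =
      if ∀ l, α (update (comb P (fun l i => u i l)) i₀ (P l i₀)) = 0 then
        (Fintype.card (Fin t → 𝔽) : ℂ) else 0 := by
    intro u
    simp only [e1]
    split_ifs with h
    · simp [h]
    · push Not at h
      obtain ⟨l, hl⟩ := h
      let L : (Fin t → 𝔽) →+ 𝔽 :=
        { toFun := fun v => ∑ l, v l * α (update (comb P (fun l i => u i l)) i₀ (P l i₀))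
          map_zero' := by simp
          map_add' := by intro a b; simp [add_mul, Finset.sum_add_distrib] }
      have h0 := AddChar.sum_eq_ite (χ.compAddMonoidHom L)
      rw [if_neg] at h0
      · exact h0
      · intro h1
        apply hχ
        ext a
        have := DFunLike.congr_fun h1
          (Pi.single l (a / α (update (comb P (fun l i => u i l)) i₀ (P l i₀))))
        simpa [L, Pi.single_apply, hl] using this
  simp only [e2] at d1
  rw [← Finset.sum_filter, Finset.sum_const, nsmul_eq_mul, nsmul_eq_mul] at d1
  rw [mul_comm] at d1
  have d2 := mul_left_cancel₀ (by exact_mod_cast hc.ne') d1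
  rw [← d2, Complex.norm_natCast]
  refine le_of_eq ?_
  congr 1
  unfold zeroCount
  refine Finset.card_bij (fun u _ => fun l i => u i l) ?_ ?_ ?_
  · intro u hu; simpa using hu
  · intro u _ v _ h
    ext i l
    exact congrFun (congrFun h l) i
  · intro u hu
    exact ⟨fun i l => u l i, by simpa using hu, rfl⟩

open Classical in
lemma one_step [Fintype 𝔽] (α : MultilinearMap 𝔽 G 𝔽) (a p : ∀ i, G i) (hp : α p ≠ 0)
    (S : Finset ι) :
    (1 - (Fintype.card 𝔽 : ℝ)⁻¹) ^ #S * Fintype.card (ι → 𝔽) ≤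
      #{v : ι → 𝔽 | α (S.piecewise (fun i => a i + v i • p i) p) ≠ 0} := by
  have hq : (1 : ℝ) < Fintype.card 𝔽 := by exact_mod_cast Fintype.one_lt_card
  induction S using Finset.induction_on with
  | empty => simp [hp]
  | insert j S hj ih =>
    set N := #{v : ι → 𝔽 | α (S.piecewise (fun i => a i + v i • p i) p) ≠ 0} with hN
    have e1 : ∀ (v : ι → 𝔽) (s : 𝔽),
        α ((insert j S).piecewise (fun i => a i + update v j s i • p i) p) =
        α (update (S.piecewise (fun i => a i + v i • p i) p) j (a j)) +
          s * α (S.piecewise (fun i => a i + v i • p i) p) := by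
      intro v s
      have h1 : (insert j S).piecewise (fun i => a i + update v j s i • p i) p =
          update (S.piecewise (fun i => a i + v i • p i) p) j (a j + s • p j) := by
        ext i
        by_cases h : i = j
        · subst h; simp
        · by_cases hS : i ∈ S <;> simp [h, hS]
      have h2 : update (S.piecewise (fun i => a i + v i • p i) p) j (p j) =
          S.piecewise (fun i => a i + v i • p i) p := by
        rw [Function.update_eq_self_iff]
        simp [hj]
      rw [h1, α.map_update_add, α.map_update_smul, h2, smul_eq_mul]
    have d := sum_dummy j (fun v : ι → 𝔽 =>
      if α ((insert j S).piecewise (fun i => a i + v i • p i) p) ≠ 0 then (1 : ℕ) else 0)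
    simp only [← Finset.card_filter, e1] at d
    have h3 : N * (Fintype.card 𝔽 - 1) ≤ ∑ v : ι → 𝔽,
        #{s : 𝔽 | α (update (S.piecewise (fun i => a i + v i • p i) p) j (a j)) +
          s * α (S.piecewise (fun i => a i + v i • p i) p) ≠ 0} := by
      rw [hN, ← smul_eq_mul, ← Finset.sum_const, Finset.sum_filter]
      refine Finset.sum_le_sum fun v _ => ?_
      split_ifs with h
      · set A := α (update (S.piecewise (fun i => a i + v i • p i) p) j (a j))
        set B := α (S.piecewise (fun i => a i + v i • p i) p)
        have : (univ.erase (-A / B) : Finset 𝔽) ⊆ ({s : 𝔽 | A + s * B ≠ 0} : Finset 𝔽) := by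
          intro s hs
          simp only [mem_erase, mem_univ, and_true] at hs
          simp only [mem_filter, mem_univ, true_and]
          intro h0
          apply hs
          rw [eq_div_iff h]
          linear_combination h0
        refine le_trans (le_of_eq ?_) (Finset.card_le_card this)
        rw [Finset.card_erase_of_mem (mem_univ _), Finset.card_univ]
      · exact Nat.zero_le _
    rw [d, smul_eq_mul] at h3
    rw [Finset.card_insert_of_notMem hj, pow_succ]
    have h4 : (N : ℝ) * (Fintype.card 𝔽 - 1) ≤ Fintype.card 𝔽 *
        #{v : ι → 𝔽 | α ((insert j S).piecewise (fun i => a i + v i • p i) p) ≠ 0} := by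
      have : ((N * (Fintype.card 𝔽 - 1) : ℕ) : ℝ) = (N : ℝ) * (Fintype.card 𝔽 - 1) := by
        rw [Nat.cast_mul, Nat.cast_sub Fintype.card_pos]; simp
      rw [← this]
      exact_mod_cast h3
    have h5 := mul_le_mul_of_nonneg_right ih (sub_nonneg.2 hq.le)
    refine le_of_mul_le_mul_left (le_trans (le_of_eq ?_) (h5.trans h4)) (by linarith)
    field_simp

open Classical in
lemma one_step' [Fintype 𝔽] (α : MultilinearMap 𝔽 G 𝔽) (a p : ∀ i, G i) (hp : α p ≠ 0)
    (i₀ : ι) :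
    (#{v : ι → 𝔽 | α (update (fun i => a i + v i • p i) i₀ (p i₀)) = 0} : ℝ) ≤
      (1 - (1 - (Fintype.card 𝔽 : ℝ)⁻¹) ^ (Fintype.card ι - 1)) * Fintype.card (ι → 𝔽) := by
  have h := one_step α a p hp (univ.erase i₀)
  rw [Finset.card_erase_of_mem (mem_univ _), Finset.card_univ] at h
  have e : ∀ v : ι → 𝔽, (univ.erase i₀).piecewise (fun i => a i + v i • p i) p =
      update (fun i => a i + v i • p i) i₀ (p i₀) := by
    intro v
    ext i
    by_cases h : i = i₀
    · subst h; simp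
    · simp [h]
  simp only [e] at h
  have h2 := Finset.card_filter_add_card_filter_not (s := (univ : Finset (ι → 𝔽)))
    (fun v : ι → 𝔽 => α (update (fun i => a i + v i • p i) i₀ (p i₀)) = 0)
  rw [Finset.card_univ] at h2
  have h3 : (#{v : ι → 𝔽 | α (update (fun i => a i + v i • p i) i₀ (p i₀)) = 0} : ℝ) +
    #{v : ι → 𝔽 | α (update (fun i => a i + v i • p i) i₀ (p i₀)) ≠ 0} = Fintype.card (ι → 𝔽) := by
    exact_mod_cast h2
  linarith

/-- triangular sequences of points. -/
def Good (α : MultilinearMap 𝔽 G 𝔽) (i₀ : ι) : (t : ℕ) → (Fin t → ∀ i, G i) → Prop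
  | 0, _ => True
  | t + 1, P => Good α i₀ t (Fin.tail P) ∧ α (P 0) ≠ 0 ∧
      ∀ (l : Fin t) (u : Fin t → ι → 𝔽) (v : ι → 𝔽),
        α (update (fun i => comb (Fin.tail P) u i + v i • P 0 i) i₀ (Fin.tail P l i₀)) =
        α (update (comb (Fin.tail P) u) i₀ (Fin.tail P l i₀))

lemma zeroCount_le [Fintype 𝔽] (α : MultilinearMap 𝔽 G 𝔽) (i₀ : ι) :
    ∀ (t : ℕ) (P : Fin t → ∀ i, G i), Good α i₀ t P →
    (zeroCount α i₀ P : ℝ) ≤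
      ((1 - (1 - (Fintype.card 𝔽 : ℝ)⁻¹) ^ (Fintype.card ι - 1)) * Fintype.card (ι → 𝔽)) ^ t := by
  classical
  intro t
  induction t with
  | zero =>
    intro P _
    simp [zeroCount]
  | succ t ih =>
    rintro P ⟨hP, hp, hl⟩
    set K := (1 - (1 - (Fintype.card 𝔽 : ℝ)⁻¹) ^ (Fintype.card ι - 1)) * Fintype.card (ι → 𝔽)
    have hK : 0 ≤ K := le_trans (by positivity) (one_step' α (P 0) (P 0) hp i₀)
    have e : ∀ (u : Fin t → ι → 𝔽) (v : ι → 𝔽),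
        comb P (Fin.cons v u : Fin (t + 1) → ι → 𝔽) =
          fun i => comb (Fin.tail P) u i + v i • P 0 i := by
      intro u v
      ext i
      simp [comb, Fin.sum_univ_succ, Fin.tail, add_comm]
    have h1 : zeroCount α i₀ P ≤ ∑ u ∈ ({u : Fin t → ι → 𝔽 | ∀ l, α (update (comb (Fin.tail P) u) i₀ (Fin.tail P l i₀)) = 0} : Finset _),
        #{v : ι → 𝔽 | α (update (fun i => comb (Fin.tail P) u i + v i • P 0 i) i₀ (P 0 i₀)) = 0} := by
      rw [← Finset.card_sigma]
      unfold zeroCount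
      refine Finset.card_le_card_of_injOn (fun w => ⟨Fin.tail w, w 0⟩) ?_ ?_
      · intro w hw
        simp only [coe_filter, mem_univ, true_and, Set.mem_ofPred_eq] at hw
        rw [← Fin.cons_self_tail w, e] at hw
        simp only [coe_sigma, Set.mem_sigma_iff, coe_filter, mem_univ, true_and, Set.mem_ofPred_eq]
        refine ⟨fun l => ?_, hw 0⟩
        rw [← hl l _ (w 0)]
        exact hw l.succ
      · intro w _ w' _ h
        simp only [Sigma.mk.injEq, heq_eq_eq] at h
        rw [← Fin.cons_self_tail w, ← Fin.cons_self_tail w', h.1, h.2]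
    have h1' := (Nat.cast_le (α := ℝ)).2 h1
    rw [Nat.cast_sum] at h1'
    refine h1'.trans ?_
    refine (Finset.sum_le_sum fun u _ =>
      one_step' α (comb (Fin.tail P) u) (P 0) hp i₀).trans ?_
    rw [Finset.sum_const, nsmul_eq_mul, pow_succ]
    exact mul_le_mul_of_nonneg_right (ih _ hP) hK

lemma good_bound [Fintype 𝔽] [∀ i, Fintype (G i)] (χ : AddChar 𝔽 ℂ) (hχ : χ ≠ 1)
    (α : MultilinearMap 𝔽 G 𝔽) (i₀ : ι) (c : ℝ)
    (hc : c ≤ (((∑ x : ∀ i, G i, χ (α x)) / (Fintype.card (∀ i, G i) : ℂ)).re))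
    (t : ℕ) (P : Fin t → ∀ i, G i) (hP : Good α i₀ t P) :
    c ≤ (1 - (1 - (Fintype.card 𝔽 : ℝ)⁻¹) ^ (Fintype.card ι - 1)) ^ t := by
  have h1 := zeroCount_le α i₀ t P hP
  have h2 := bias_le_zeroCount χ hχ α i₀ P
  let φ : ∀ i, (Fin t → 𝔽) →ₗ[𝔽] G i := fun i => Fintype.linearCombination 𝔽 (fun l => P l i)
  have h3 := bias_avg χ α φ
  have e : ∀ u : ι → Fin t → 𝔽, (fun i => φ i (u i)) = fun i => ∑ l, u i l • P l i := by
    intro u; rfl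
  simp only [e] at h3
  have hG : (0 : ℝ) < Fintype.card (∀ i, G i) := by exact_mod_cast Fintype.card_pos
  have hV : (0 : ℝ) < Fintype.card (ι → Fin t → 𝔽) := by exact_mod_cast Fintype.card_pos
  have h4 : c * Fintype.card (∀ i, G i) ≤ ‖∑ x : ∀ i, G i, χ (α x)‖ := by
    rw [← le_div_iff₀ hG]
    refine (hc.trans (Complex.re_le_norm _)).trans (le_of_eq ?_)
    rw [norm_div, Complex.norm_natCast]
  have hcard : (Fintype.card (ι → Fin t → 𝔽) : ℝ) = (Fintype.card (ι → 𝔽) : ℝ) ^ t := by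
    simp [← pow_mul, mul_comm]
  rw [mul_pow, ← hcard] at h1
  refine le_of_mul_le_mul_right ?_ (mul_pos hV hG)
  calc c * (Fintype.card (ι → Fin t → 𝔽) * Fintype.card (∀ i, G i))
      = Fintype.card (ι → Fin t → 𝔽) * (c * Fintype.card (∀ i, G i)) := by ring
    _ ≤ _ := mul_le_mul_of_nonneg_left h4 hV.le
    _ ≤ _ := h3
    _ ≤ _ := mul_le_mul_of_nonneg_left (h2.trans h1) hG.le
    _ = _ := by ring

lemma good_extend (α : MultilinearMap 𝔽 G 𝔽) (i₀ : ι) (t : ℕ) (P : Fin t → ∀ i, G i)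
    (hP : Good α i₀ t P) (x : ∀ i, G i) (hx : α x ≠ 0)
    (h : ∀ (S : Finset ι), S.Nonempty → i₀ ∉ S → ∀ (f : ι → Fin t) (l : Fin t),
      α (S.piecewise x (update (fun i => P (f i) i) i₀ (P l i₀))) = 0) :
    Good α i₀ (t + 1) (Fin.cons x P : Fin (t + 1) → ∀ i, G i) := by
  refine ⟨hP, hx, ?_⟩
  intro l u v
  simp only [Fin.tail_cons, Fin.cons_zero]
  -- the vector being added
  have e1 : update (fun i => comb P u i + v i • x i) i₀ (P l i₀) =
      update (comb P u) i₀ (P l i₀) + update (fun i => v i • x i) i₀ 0 := by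
    ext i
    by_cases h : i = i₀
    · subst h; simp
    · simp [h]
  rw [e1, add_comm, α.map_add_univ]
  rw [Finset.sum_eq_single (∅ : Finset ι)]
  · simp
  · intro S _ hS
    have hSn : S.Nonempty := Finset.nonempty_iff_ne_empty.2 hS
    by_cases hi : i₀ ∈ S
    · refine α.map_coord_zero i₀ ?_
      simp [hi]
    · -- expand
      have e2 : S.piecewise (update (fun i => v i • x i) i₀ 0) (update (comb P u) i₀ (P l i₀)) =
          fun i => ∑ m : Fin t, (if i ∈ S then (if m = l then v i else 0) else
            if i = i₀ then (if m = l then 1 else 0) else u m i) •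
              (S.piecewise x (update (P m) i₀ (P l i₀)) i) := by
        ext i
        by_cases hiS : i ∈ S
        · have : i ≠ i₀ := fun h => hi (h ▸ hiS)
          simp [hiS, this]
        · by_cases h0 : i = i₀
          · subst h0; simp [hi]
          · simp [hiS, h0, comb]
      rw [e2, α.map_sum]
      refine Finset.sum_eq_zero fun f _ => ?_
      rw [α.map_smul_univ]
      have e3 : (fun i => S.piecewise x (update (P (f i)) i₀ (P l i₀)) i) =
          S.piecewise x (update (fun i => P (f i) i) i₀ (P l i₀)) := by
        ext i
        by_cases hiS : i ∈ S
        · simp [hiS]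
        · by_cases h0 : i = i₀
          · subst h0; simp [hi]
          · simp [hiS, h0]
      rw [e3, h S hSn hi f l, smul_zero]
  · simp

end

lemma exists_N (m : ℕ) : ∃ N : ℕ, 0 < N ∧ ∀ q : ℕ, 2 ≤ q →
    (1 - (1 - (q : ℝ)⁻¹) ^ m) ^ N ≤ (q : ℝ)⁻¹ := by
  have hlt : (1 - (1 / 2 : ℝ) ^ m) < 1 := by
    have : (0 : ℝ) < (1 / 2 : ℝ) ^ m := by positivity
    linarith
  have h0 : (0 : ℝ) ≤ 1 - (1 / 2 : ℝ) ^ m := by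
    have : (1 / 2 : ℝ) ^ m ≤ 1 := pow_le_one₀ (by norm_num) (by norm_num)
    linarith
  obtain ⟨N, hN⟩ := exists_pow_lt_of_lt_one (y := (1 - (1 / 2 : ℝ) ^ m))
    (x := ((m : ℝ) ^ 2 + 1)⁻¹) (by positivity) hlt
  refine ⟨N + 2, by omega, fun q hq => ?_⟩
  have hq2 : (2 : ℝ) ≤ q := by exact_mod_cast hq
  have hqi : (q : ℝ)⁻¹ ≤ 1 / 2 := by
    rw [one_div]; exact inv_anti₀ (by norm_num) hq2
  have hqp : 0 < (q : ℝ)⁻¹ := by positivity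
  set θ := 1 - (1 - (q : ℝ)⁻¹) ^ m with hθ
  have hθ0 : 0 ≤ θ := by
    have : (1 - (q : ℝ)⁻¹) ^ m ≤ 1 := pow_le_one₀ (by linarith) (by linarith)
    linarith
  have hθ1 : θ ≤ 1 - (1 / 2 : ℝ) ^ m := by
    have : (1 / 2 : ℝ) ^ m ≤ (1 - (q : ℝ)⁻¹) ^ m :=
      pow_le_pow_left₀ (by norm_num) (by linarith) m
    linarith
  have hθle : θ ≤ 1 := by linarith
  by_cases hm : (q : ℝ) ≤ (m : ℝ) ^ 2 + 1
  · calc θ ^ (N + 2) ≤ θ ^ N := pow_le_pow_of_le_one hθ0 hθle (by omega)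
      _ ≤ (1 - (1 / 2 : ℝ) ^ m) ^ N := pow_le_pow_left₀ hθ0 hθ1 N
      _ ≤ _ := hN.le
      _ ≤ _ := inv_anti₀ (by positivity) hm
  · push Not at hm
    have hb : θ ≤ m * (q : ℝ)⁻¹ := by
      have := one_add_mul_le_pow (a := -(q : ℝ)⁻¹) (by linarith) m
      rw [← sub_eq_add_neg] at this
      rw [hθ]
      linarith
    calc θ ^ (N + 2) ≤ θ ^ 2 := pow_le_pow_of_le_one hθ0 hθle (by omega)
      _ ≤ (m * (q : ℝ)⁻¹) ^ 2 := pow_le_pow_left₀ hθ0 hb 2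
      _ = ((m : ℝ) ^ 2 * (q : ℝ)⁻¹) * (q : ℝ)⁻¹ := by ring
      _ ≤ 1 * (q : ℝ)⁻¹ := by
        refine mul_le_mul_of_nonneg_right ?_ hqp.le
        rw [← div_eq_mul_inv, div_le_one (by linarith)]
        linarith
      _ = _ := one_mul _

lemma t_bound (q N t : ℕ) (hq : 2 ≤ q) (hN : 0 < N) (θ c : ℝ) (hθ : 0 ≤ θ)
    (h : θ ^ N ≤ (q : ℝ)⁻¹) (hc : 0 < c) (hct : c ≤ θ ^ t) :
    (t : ℝ) ≤ N * Real.logb q (q * c⁻¹) := by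
  have hq1 : (1 : ℝ) < q := by exact_mod_cast hq
  have hθ1 : θ ≤ 1 := by
    by_contra hcon
    push Not at hcon
    have : (q : ℝ)⁻¹ < 1 := inv_lt_one_of_one_lt₀ hq1
    have := one_le_pow₀ hcon.le (n := N)
    linarith
  have h1 : c ≤ ((q : ℝ)⁻¹) ^ (t / N) := by
    refine hct.trans ?_
    calc θ ^ t ≤ θ ^ (N * (t / N)) := pow_le_pow_of_le_one hθ hθ1 (Nat.mul_div_le t N)
      _ = (θ ^ N) ^ (t / N) := pow_mul _ _ _
      _ ≤ _ := pow_le_pow_left₀ (by positivity) h _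
  have h2 : (q : ℝ) ^ (t / N) ≤ c⁻¹ := by
    rw [inv_pow] at h1
    exact (le_inv_comm₀ hc (by positivity)).1 h1
  have h3 : ((t / N : ℕ) : ℝ) + 1 ≤ Real.logb q (q * c⁻¹) := by
    rw [Real.le_logb_iff_rpow_le hq1 (by positivity), Real.rpow_add (by positivity),
      Real.rpow_natCast, Real.rpow_one, mul_comm]
    exact mul_le_mul_of_nonneg_left h2 (by positivity)
  have h4 : (t : ℝ) ≤ N * (((t / N : ℕ) : ℝ) + 1) := by
    have : t ≤ N * (t / N + 1) := (Nat.lt_mul_div_succ t hN).le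
    exact_mod_cast this
  exact h4.trans (mul_le_mul_of_nonneg_left h3 (by positivity))

/-- **Weak inverse theorem for multilinear forms of low analytic rank.**
For every positive integer `k` there are constants `C, D > 0` such that for every
finite field `𝔽` with nontrivial additive character `χ`, all finite-dimensional
`𝔽`-vector spaces `G 0, …, G (k-1)`, every multilinear form `α` whose bias
`𝔼 χ(α)` is at least `c > 0` vanishes on a variety cut out by at most
`C (log_{|𝔽|} (|𝔽| c⁻¹))^D` multilinear forms, each depending only on a nonempty
set of coordinates contained in `[k-1]` (i.e. avoiding the last coordinate). -/
theorem weak_inverse_theorem :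
    ∀ k : ℕ, 0 < k → ∃ C D : ℝ, 0 < C ∧ 0 < D ∧
      ∀ (𝔽 : Type) [Field 𝔽] [Fintype 𝔽]
        (G : Fin k → Type) [∀ i, AddCommGroup (G i)] [∀ i, Module 𝔽 (G i)]
        [∀ i, Fintype (G i)] [∀ i, FiniteDimensional 𝔽 (G i)]
        (χ : AddChar 𝔽 ℂ), χ ≠ 1 →
      ∀ (α : MultilinearMap 𝔽 G 𝔽) (c : ℝ), 0 < c →
      c ≤ (((∑ x : ∀ i, G i, χ (α x)) / (Fintype.card (∀ i, G i) : ℂ)).re) →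
      ∃ r : ℕ,
        (r : ℝ) ≤ C * (Real.logb (Fintype.card 𝔽) ((Fintype.card 𝔽 : ℝ) * c⁻¹)) ^ D ∧
        ∃ (I : Fin r → Finset (Fin k))
          (β : ∀ i, MultilinearMap 𝔽 (fun j : ↥(I i) => G j.1) 𝔽),
          (∀ i, (I i).Nonempty ∧ ∀ j ∈ I i, (j : ℕ) + 1 < k) ∧
          ∀ x : ∀ i, G i, (∀ i, β i (fun j => x j.1) = 0) → α x = 0 := by
  classical
  intro k hk
  obtain ⟨N, hN, hNq⟩ := exists_N (k - 1)
  refine ⟨2 ^ k * N ^ (k + 1) + 1, k + 1, by positivity, by positivity, ?_⟩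
  intro 𝔽 _ _ G _ _ _ _ χ hχ α c hc hcb
  have hq : 2 ≤ Fintype.card 𝔽 := Fintype.one_lt_card
  let i₀ : Fin k := ⟨k - 1, by omega⟩
  have hqi : (1 - (1 - (Fintype.card 𝔽 : ℝ)⁻¹) ^ (k - 1)) ^ N ≤ (Fintype.card 𝔽 : ℝ)⁻¹ :=
    hNq _ hq
  set θ : ℝ := 1 - (1 - (Fintype.card 𝔽 : ℝ)⁻¹) ^ (k - 1) with hθ
  have hθ0 : 0 ≤ θ := by
    have h1 : (1 : ℝ) ≤ Fintype.card 𝔽 := by exact_mod_cast (by omega : 1 ≤ Fintype.card 𝔽)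
    have h2 : (Fintype.card 𝔽 : ℝ)⁻¹ ≤ 1 := inv_le_one_of_one_le₀ h1
    have h3 : 0 ≤ (Fintype.card 𝔽 : ℝ)⁻¹ := by positivity
    have : (1 - (Fintype.card 𝔽 : ℝ)⁻¹) ^ (k - 1) ≤ 1 := pow_le_one₀ (by linarith) (by linarith)
    linarith
  have hbound : ∀ t P, Good α i₀ t P →
      (t : ℝ) ≤ N * Real.logb (Fintype.card 𝔽) ((Fintype.card 𝔽 : ℝ) * c⁻¹) := by
    intro t P hP
    have := good_bound χ hχ α i₀ c hcb t P hP
    rw [Fintype.card_fin] at this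
    exact t_bound _ N t hq hN θ c hθ0 hqi hc this
  -- a maximal good sequence
  obtain ⟨t, P, hP, hmax⟩ : ∃ t P, Good α i₀ t P ∧ ∀ P', ¬ Good α i₀ (t + 1) P' := by
    by_contra hcon
    push Not at hcon
    have hall : ∀ t, ∃ P, Good α i₀ t P := by
      intro t
      induction t with
      | zero => exact ⟨fun l => l.elim0, trivial⟩
      | succ t ih =>
        obtain ⟨P, hP⟩ := ih
        exact hcon t P hP
    obtain ⟨n, hn⟩ := exists_nat_gt (N * Real.logb (Fintype.card 𝔽) ((Fintype.card 𝔽 : ℝ) * c⁻¹))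
    obtain ⟨P, hP⟩ := hall n
    exact absurd (hbound n P hP) (not_le.2 hn)
  have ht := hbound t P hP
  set Λ := Real.logb (Fintype.card 𝔽) ((Fintype.card 𝔽 : ℝ) * c⁻¹) with hΛ
  have hΛ0 : 0 ≤ Λ := by
    have hN' : (0 : ℝ) < N := by exact_mod_cast hN
    have : 0 ≤ N * Λ := le_trans (by positivity) ht
    exact nonneg_of_mul_nonneg_right this hN'
  let T := {S : Finset (Fin k) // S.Nonempty ∧ i₀ ∉ S} × (Fin k → Fin t) × Fin t
  let e : Fin (Fintype.card T) ≃ T := (Fintype.equivFin T).symm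
  refine ⟨Fintype.card T, ?_, fun i => (e i).1.1, fun i =>
    α.domDomRestrict (fun j => j ∈ (e i).1.1)
      (fun j => update (fun i' => P ((e i).2.1 i') i') i₀ (P (e i).2.2 i₀) j.1), ?_, ?_⟩
  · have h1 : Fintype.card T ≤ 2 ^ k * t ^ (k + 1) := by
      have h2 : Fintype.card {S : Finset (Fin k) // S.Nonempty ∧ i₀ ∉ S} ≤ 2 ^ k := by
        refine (Fintype.card_subtype_le _).trans (by simp)
      simp only [T, Fintype.card_prod, Fintype.card_fun, Fintype.card_fin, pow_succ]
      exact Nat.mul_le_mul_right _ h2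
    have h2 : ((k : ℝ) + 1) = ((k + 1 : ℕ) : ℝ) := by push_cast; rfl
    rw [h2, Real.rpow_natCast]
    calc (Fintype.card T : ℝ) ≤ 2 ^ k * (t : ℝ) ^ (k + 1) := by exact_mod_cast h1
      _ ≤ 2 ^ k * (N * Λ) ^ (k + 1) := by gcongr
      _ = (2 ^ k * N ^ (k + 1)) * Λ ^ (k + 1) := by ring
      _ ≤ _ := by gcongr; linarith
  · intro i
    refine ⟨(e i).1.2.1, fun j hj => ?_⟩
    by_contra hcon
    have : j = i₀ := by
      apply Fin.ext
      simp only [i₀]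
      omega
    exact (e i).1.2.2 (this ▸ hj)
  · intro x hx
    by_contra hne
    refine hmax _ (good_extend α i₀ t P hP x hne ?_)
    intro S hS hi f l
    have h0 : ∀ i, α ((e i).1.1.piecewise x
        (update (fun i' => P ((e i).2.1 i') i') i₀ (P (e i).2.2 i₀))) = 0 := by
      intro i
      refine Eq.trans ?_ (hx i)
      rw [MultilinearMap.domDomRestrict_apply]
      congr 1
    have h1 := h0 (e.symm (⟨S, hS, hi⟩, f, l))
    rw [e.apply_symm_apply] at h1
    exact h1
end
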